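/- arXiv:1802.00338 — 11 statements merged into one kernel-verified Lean document; each statement's English description precedes it below -/
import Mathlib

section
/- Let λ ≥ 2 be a natural number. For every solution (x(t), y(t), z(t)) of the rattleback system, the function H(t) := x(t) · y(t)^λ is constant, i.e. x(t) · y(t)^λ = x(0) · y(0)^λ for all t ∈ ℝ. -/
/-!
Along a solution, `x` and `y` have relative growth rates `λz` and `-z`. Relative growth rates add
under products and are multiplied by `n` under `n`-th powers, so the rate of `x * y ^ λ` is
`λz + λ(-z) = 0`. Working with rates `u` in `f' = f * u`, rather than with `f' / f`, covers
solutions that vanish.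
-/

section RelativeGrowthRate

variable {𝕜 𝔸 : Type*} [NontriviallyNormedField 𝕜] [NormedCommRing 𝔸] [NormedAlgebra 𝕜 𝔸]
  {f g : 𝕜 → 𝔸} {u v : 𝔸} {t : 𝕜}

theorem hasDerivAt_fun_mul_of_self_mul (hf : HasDerivAt f (f t * u) t)
    (hg : HasDerivAt g (g t * v) t) :
    HasDerivAt (fun s ↦ f s * g s) (f t * g t * (u + v)) t :=
  (hf.fun_mul hg).congr_deriv (by ring)

theorem hasDerivAt_fun_pow_of_self_mul (hf : HasDerivAt f (f t * u) t) (n : ℕ) :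
    HasDerivAt (fun s ↦ f s ^ n) (f t ^ n * (n * u)) t := by
  refine (hf.fun_pow n).congr_deriv ?_
  cases n with
  | zero => simp
  | succ n => rw [Nat.add_sub_cancel]; ring

theorem hasDerivAt_fun_mul_pow_zero {n : ℕ} (hf : HasDerivAt f (n * f t * u) t)
    (hg : HasDerivAt g (-(g t * u)) t) :
    HasDerivAt (fun s ↦ f s * g s ^ n) 0 t := by
  have hf_rate : HasDerivAt f (f t * (n * u)) t := hf.congr_deriv (by ring)
  have hg_rate : HasDerivAt g (g t * -u) t := hg.congr_deriv (by ring)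
  have hg_pow := hasDerivAt_fun_pow_of_self_mul hg_rate n
  exact (hasDerivAt_fun_mul_of_self_mul hf_rate hg_pow).congr_deriv (by ring)

end RelativeGrowthRate

theorem rattleback_hamiltonian_constant_general {𝕜 𝔸 : Type*} [RCLike 𝕜] [NormedCommRing 𝔸]
    [NormedAlgebra 𝕜 𝔸] {U : Set 𝕜} (hU : IsOpen U) (hU' : IsPreconnected U) (n : ℕ)
    (x y z : 𝕜 → 𝔸) (hx : ∀ t ∈ U, HasDerivAt x (n * x t * z t) t)
    (hy : ∀ t ∈ U, HasDerivAt y (-(y t * z t)) t) {s t : 𝕜} (hs : s ∈ U) (ht : t ∈ U) :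
    x s * y s ^ n = x t * y t ^ n := by
  have hH : ∀ r ∈ U, HasDerivAt (fun r ↦ x r * y r ^ n) 0 r := fun r hr ↦
    hasDerivAt_fun_mul_pow_zero (hx r hr) (hy r hr)
  exact hU.is_const_of_deriv_eq_zero hU'
    (fun r hr ↦ (hH r hr).differentiableAt.differentiableWithinAt)
    (fun r hr ↦ (hH r hr).deriv) hs ht

/-- For every solution of the rattleback system `ẋ = λxz, ẏ = −yz, ż = y² − λx²`
(with parameter `λ ≥ 2` a natural number), the Hamiltonian
`H(t) = x(t)·y(t)^λ` is constant. -/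
theorem rattleback_hamiltonian_constant (lam : ℕ) (hlam : 2 ≤ lam)
    (x y z : ℝ → ℝ)
    (hx : ∀ t : ℝ, HasDerivAt x ((lam : ℝ) * x t * z t) t)
    (hy : ∀ t : ℝ, HasDerivAt y (-(y t * z t)) t)
    (hz : ∀ t : ℝ, HasDerivAt z ((y t) ^ 2 - (lam : ℝ) * (x t) ^ 2) t) :
    ∀ t : ℝ, x t * (y t) ^ lam = x 0 * (y 0) ^ lam := by
  intro t
  exact rattleback_hamiltonian_constant_general isOpen_univ isPreconnected_univ lam x y z
    (fun s _ ↦ hx s) (fun s _ ↦ hy s) (Set.mem_univ t) (Set.mem_univ 0)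
end

section
/- Let λ ≥ 2 be a natural number and let a, b, c, d ∈ ℝ satisfy ad − bc = 1. For every (x, y, z) ∈ ℝ³ with y ≠ 0, the rescaled Hamiltonian vector field y^{1−λ} · Π_{a,b}(x,y,z) · ∇H_{c,d}(x,y,z) equals the rattleback vector field (λxz, −yz, y² − λx²), where Π_{a,b}(x,y,z) is the 3×3 skew-symmetric matrix with entries Π₁₂ = az, Π₁₃ = −ay − λbxy^{λ−1}, Π₂₃ = ax + by^λ (and Π₂₁ = −Π₁₂, Π₃₁ = −Π₁₃, Π₃₂ = −Π₂₃, zero diagonal), and ∇H_{c,d}(x,y,z) = (cx + dy^λ, cy + dλxy^{λ−1}, cz) is the gradient of H_{c,d}(x,y,z) = (c/2)(x² + y² + z²) + d·xy^λ. In particular (taking a = d = 1, b = c = 0), y^{1−λ} · Π_C(x,y,z) · ∇H(x,y,z) = (λxz, −yz, y² − λx²), where Π_C has entries Π₁₂ = z, Π₁₃ = −y, Π₂₃ = x and H(x,y,z) = xy^λ. -/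
/-!
Both `∇C_{a,b}` and `∇H_{c,d}` lie in the plane spanned by `r = (x, y, z)` and
`g = ∇(x y^λ)`, and the Poisson tensor of a Casimir `C` acts by `v ↦ v × ∇C`. Since the cross
product is alternating, changing from the pair `(r, g)` to `(∇C_{a,b}, ∇H_{c,d})` multiplies
`g × r` by the determinant `a d - b c`. Finally `g × r` is `y^{λ-1}` times the rattleback field.
-/

section General

theorem isAlt_apply_smul_add_smul {R M N : Type*} [CommRing R] [AddCommGroup M] [Module R M]
    [AddCommGroup N] [Module R N] {B : M →ₗ[R] M →ₗ[R] N} (hB : B.IsAlt) (a b c d : R) (u v : M) :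
    B (c • u + d • v) (a • u + b • v) = (a * d - b * c) • B v u := by
  have skew : B u v = -B v u := (hB.neg v u).symm
  simp only [map_add, map_smul, LinearMap.add_apply, LinearMap.smul_apply, hB.self_eq_zero, skew]
  module

theorem isAlt_crossProduct {R : Type*} [CommRing R] :
    (crossProduct : (Fin 3 → R) →ₗ[R] (Fin 3 → R) →ₗ[R] Fin 3 → R).IsAlt :=
  fun v ↦ cross_self v

theorem zpow_one_sub_mul_pow {G : Type*} [GroupWithZero G] {y : G} (hy : y ≠ 0) (n : ℕ) :
    y ^ (1 - (n : ℤ)) * y ^ n = y := by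
  rw [← zpow_natCast, ← zpow_add₀ hy, sub_add_cancel, zpow_one]

theorem zpow_one_sub_mul_natCast_mul_pow_pred {K : Type*} [Semifield K] {y : K} (hy : y ≠ 0)
    (n : ℕ) : y ^ (1 - (n : ℤ)) * (n * y ^ (n - 1)) = n := by
  rcases n.eq_zero_or_pos with rfl | hn
  · simp only [Nat.cast_zero, zero_mul, mul_zero]
  · have cancel : y ^ (1 - (n : ℤ)) * y ^ (n - 1) = 1 := by
      rw [← zpow_natCast y (n - 1), ← zpow_add₀ hy, Nat.cast_pred hn, sub_add_sub_cancel',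
        sub_self, zpow_zero]
    rw [mul_left_comm, cancel, mul_one]

end General

namespace Rattleback

open Matrix

section PoissonTensor

variable {R : Type*} [CommRing R]

/-- The matrix `Π_C` of the Poisson structure on three-space whose Casimir function `C` has
gradient `w`, with the sign for which `Π_C` acts as `v ↦ v × w`. -/
def poissonMatrix (w : Fin 3 → R) : Matrix (Fin 3) (Fin 3) R :=
  !![0, w 2, -w 1;
     -w 2, 0, w 0;
     w 1, -w 0, 0]

theorem poissonMatrix_mulVec (w v : Fin 3 → R) : poissonMatrix w *ᵥ v = v ⨯₃ w := by
  simp only [poissonMatrix, cross_apply, cons_mulVec, empty_mulVec, vec3_dotProduct, cons_val]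
  apply vec3_eq <;> ring

end PoissonTensor

section VectorField

variable {R : Type*} [CommRing R]

/-- The rattleback vector field with parameter `lam`. -/
def vectorField (lam : ℕ) (x y z : R) : Fin 3 → R :=
  ![lam * x * z, -(y * z), y ^ 2 - lam * x ^ 2]

/-- The gradient of the monomial first integral `x y ^ lam` of the rattleback system. At `lam = 0`
the truncated exponent `lam - 1` is harmless, since its coefficient vanishes. -/
def monomialGradient (lam : ℕ) (x y : R) : Fin 3 → R :=
  ![y ^ lam, lam * x * y ^ (lam - 1), 0]

/-- The gradient of the first integral `(a / 2) (x² + y² + z²) + b x y ^ lam`. The Casimir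
functions `C_{a,b}` and the Hamiltonians `H_{c,d}` all belong to this one family. -/
def integralGradient (lam : ℕ) (a b x y z : R) : Fin 3 → R :=
  ![a * x + b * y ^ lam, a * y + b * lam * x * y ^ (lam - 1), a * z]

theorem integralGradient_eq_smul_add_smul (lam : ℕ) (a b x y z : R) :
    integralGradient lam a b x y z = a • ![x, y, z] + b • monomialGradient lam x y := by
  simp [integralGradient, monomialGradient, mul_assoc]

theorem poissonMatrix_integralGradient (lam : ℕ) (a b x y z : R) :
    poissonMatrix (integralGradient lam a b x y z) =
      !![0, a * z, -(a * y) - lam * b * x * y ^ (lam - 1);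
         -(a * z), 0, a * x + b * y ^ lam;
         a * y + lam * b * x * y ^ (lam - 1), -(a * x + b * y ^ lam), 0] := by
  simp only [poissonMatrix, integralGradient, cons_val, neg_add', mul_comm (lam : R) b]

theorem integralGradient_cross_integralGradient (lam : ℕ) (a b c d x y z : R) :
    integralGradient lam c d x y z ⨯₃ integralGradient lam a b x y z =
      (a * d - b * c) • (monomialGradient lam x y ⨯₃ ![x, y, z]) := by
  simp only [integralGradient_eq_smul_add_smul]
  exact isAlt_apply_smul_add_smul isAlt_crossProduct a b c d _ _

end VectorField

theorem zpow_smul_monomialGradient_cross {K : Type*} [Field K] (lam : ℕ) (x : K) {y : K}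
    (hy : y ≠ 0) (z : K) :
    y ^ (1 - (lam : ℤ)) • (monomialGradient lam x y ⨯₃ ![x, y, z]) = vectorField lam x y z := by
  have hpow := zpow_one_sub_mul_pow hy lam
  have hderiv := zpow_one_sub_mul_natCast_mul_pow_pred hy lam
  simp only [cross_apply, monomialGradient, vectorField, smul_vec3, smul_eq_mul, cons_val]
  refine vec3_eq ?_ ?_ ?_
  · linear_combination x * z * hderiv
  · linear_combination -z * hpow
  · linear_combination y * hpow - x ^ 2 * hderiv

end Rattleback

open Rattleback Matrix in
theorem rattleback_hamilton_poisson_realizations_general {K : Type*} [Field K] (lam : ℕ)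
    (a b c d x : K) {y : K} (hy : y ≠ 0) (z : K) :
    y ^ (1 - (lam : ℤ)) •
        (poissonMatrix (integralGradient lam a b x y z) *ᵥ integralGradient lam c d x y z) =
      (a * d - b * c) • vectorField lam x y z := by
  rw [poissonMatrix_mulVec, integralGradient_cross_integralGradient, smul_comm,
    zpow_smul_monomialGradient_cross lam x hy]

/-- Hamilton–Poisson realizations of the rattleback system parameterized by `SL(2,ℝ)`:
for `a d − b c = 1` and `y ≠ 0`, the rescaled Hamiltonian vector field
`y^{1−λ} · Π_{a,b}(x,y,z) · ∇H_{c,d}(x,y,z)` equals the rattleback vector field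
`(λxz, −yz, y² − λx²)`; in particular (for `a = d = 1`, `b = c = 0`)
`y^{1−λ} · Π_C(x,y,z) · ∇H(x,y,z)` equals the rattleback vector field. -/
theorem rattleback_hamilton_poisson_realizations (lam : ℕ) (hlam : 2 ≤ lam)
    (a b c d : ℝ) (habcd : a * d - b * c = 1)
    (x y z : ℝ) (hy : y ≠ 0) :
    (y ^ ((1 : ℤ) - (lam : ℤ))) •
      Matrix.mulVec
        !![0, a * z, -(a * y) - (lam : ℝ) * b * x * y ^ (lam - 1);
           -(a * z), 0, a * x + b * y ^ lam;
           a * y + (lam : ℝ) * b * x * y ^ (lam - 1), -(a * x + b * y ^ lam), 0]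
        ![c * x + d * y ^ lam, c * y + d * (lam : ℝ) * x * y ^ (lam - 1), c * z]
      = ![(lam : ℝ) * x * z, -(y * z), y ^ 2 - (lam : ℝ) * x ^ 2]
    ∧
    (y ^ ((1 : ℤ) - (lam : ℤ))) •
      Matrix.mulVec
        !![0, z, -y;
           -z, 0, x;
           y, -x, 0]
        ![y ^ lam, (lam : ℝ) * x * y ^ (lam - 1), 0]
      = ![(lam : ℝ) * x * z, -(y * z), y ^ 2 - (lam : ℝ) * x ^ 2] := by
  have realization (a b c d : ℝ) :=
    rattleback_hamilton_poisson_realizations_general lam a b c d x hy z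
  constructor
  · rw [← Rattleback.poissonMatrix_integralGradient]
    exact (realization a b c d).trans (by rw [habcd, one_smul, Rattleback.vectorField])
  · simpa [Rattleback.poissonMatrix, Rattleback.integralGradient, Rattleback.vectorField]
      using realization 1 0 0 1
end

section
/- Let λ ≥ 2 be a natural number and M ∈ ℝ. The equilibria e₊ = (M, M√λ, 0) and e₋ = (M, −M√λ, 0) of the rattleback system are Lyapunov stable: for each of these points e and every ε > 0 there exists δ > 0 such that every solution (x(t), y(t), z(t)) of the rattleback system with ‖(x(0), y(0), z(0)) − e‖ < δ satisfies ‖(x(t), y(t), z(t)) − e‖ < ε for all t ≥ 0. -/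
/-!
The norm and `C = x |y|^λ` are first integrals: `x` and `y` solve linear equations, so
`x(t) = x(0) exp (λ ∫ z)` and `y(t) = y(0) exp (-∫ z)`. For `λ ≥ 0` an equilibrium `(a, b, 0)`,
`b² = λa²`, maximizes `|C|` on its energy sphere: by `log s ≤ s - 1`, a point with the same norm
and the same `C` has `x = a`, `|y| = |b|` and `z = 0`. It is therefore isolated in its joint level
set, and a trajectory starting close to it cannot cross a small sphere around it, because the
values of the first integrals on that sphere stay away from their value at the equilibrium.
-/

open Filter Metric Set Topology

section LyapunovStability

variable {X : Type*} [PseudoMetricSpace X]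

/-- Lyapunov stability of the point `e` for a family `S` of trajectories, which in the applications
is the set of solutions of a differential equation. It constrains the trajectories in forward time
only, and `e` is not required to be an equilibrium. -/
def IsLyapunovStable (S : Set (ℝ → X)) (e : X) : Prop :=
  ∀ ε > 0, ∃ δ > 0, ∀ γ ∈ S, dist (γ 0) e < δ → ∀ t ≥ 0, dist (γ t) e < ε

theorem isLyapunovStable_of_isolated_level [ProperSpace X] {Y : Type*} [TopologicalSpace Y]
    [T2Space Y] {S : Set (ℝ → X)} {F : X → Y} {e : X} (hF : Continuous F)
    (hS : ∀ γ ∈ S, ContinuousOn γ (Ici 0)) (hconst : ∀ γ ∈ S, ∀ t ≥ 0, F (γ t) = F (γ 0))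
    (hiso : ∀ᶠ v in 𝓝 e, F v = F e → dist v e = 0) :
    IsLyapunovStable S e := by
  intro ε hε
  obtain ⟨ρ, hρ, hball⟩ := Metric.eventually_nhds_iff.1 hiso
  obtain ⟨r, hr, hrερ⟩ := exists_between (lt_min hε hρ)
  obtain ⟨hrε, hrρ⟩ := lt_min_iff.1 hrερ
  have hclosed : IsClosed (F '' sphere e r) := ((isCompact_sphere e r).image hF).isClosed
  have he : F e ∉ F '' sphere e r := by
    rintro ⟨v, hv, hve⟩
    rw [mem_sphere] at hv
    exact hr.ne' (hv ▸ hball (hv ▸ hrρ) hve)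
  obtain ⟨d, hd, hdisj⟩ := Metric.eventually_nhds_iff.1
    (hF.continuousAt.eventually_mem (hclosed.isOpen_compl.mem_nhds he))
  refine ⟨min d r, lt_min hd hr, fun γ hγ h0 t ht => ?_⟩
  by_contra! hfar
  have hcont : ContinuousOn (fun s => dist (γ s) e) (Icc 0 t) :=
    (continuous_id.dist continuous_const).comp_continuousOn
      ((hS γ hγ).mono Icc_subset_Ici_self)
  obtain ⟨s, hs, hcross⟩ := intermediate_value_Icc ht hcont
    ⟨(h0.trans_le (min_le_right _ _)).le, hrε.le.trans hfar⟩
  exact hdisj (h0.trans_le (min_le_left _ _)) ⟨γ s, hcross, hconst γ hγ s hs.1⟩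

end LyapunovStability

theorem eventually_nhds_eq_of_sq_eq_sq {R : Type*} [CommRing R] [NoZeroDivisors R]
    [TopologicalSpace R] [T1Space R] (a : R) : ∀ᶠ x in 𝓝 a, x ^ 2 = a ^ 2 → x = a := by
  by_cases ha : a = -a
  · refine Eventually.of_forall fun x hx => ?_
    exact (sq_eq_sq_iff_eq_or_eq_neg.1 hx).elim id fun h => h.trans ha.symm
  · filter_upwards [isOpen_ne.mem_nhds ha] with x hx hsq
    exact (sq_eq_sq_iff_eq_or_eq_neg.1 hsq).resolve_right hx

theorem eq_mul_exp_integral_of_hasDerivAt {u a : ℝ → ℝ} (ha : Continuous a)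
    (hu : ∀ t, HasDerivAt u (u t * a t) t) (t₀ t : ℝ) :
    u t = u t₀ * Real.exp (∫ s in t₀..t, a s) := by
  have hderiv (t : ℝ) : HasDerivAt (fun t => u t * Real.exp (-∫ s in t₀..t, a s)) 0 t :=
    ((hu t).mul (ha.integral_hasStrictDerivAt t₀ t).hasDerivAt.fun_neg.exp).congr_deriv (by ring)
  have hconst := is_const_of_deriv_eq_zero (fun t => (hderiv t).differentiableAt)
    (fun t => (hderiv t).deriv) t t₀
  rw [intervalIntegral.integral_same, neg_zero, Real.exp_zero, mul_one, Real.exp_neg] at hconst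
  rw [← hconst, inv_mul_cancel_right₀ (Real.exp_ne_zero _)]

theorem eq_one_of_mul_rpow_eq_one_of_sq_add_mul_sq_le {lam u w : ℝ} (hlam : 0 < lam) (hw : 0 < w)
    (hmul : u * w ^ lam = 1) (hle : u ^ 2 + lam * w ^ 2 ≤ 1 + lam) : u = 1 ∧ w = 1 := by
  have hu : 0 < u := pos_of_mul_pos_left (hmul ▸ one_pos) (Real.rpow_nonneg hw.le lam)
  have hlog : Real.log (u ^ 2) + lam * Real.log (w ^ 2) = 0 := by
    have h : Real.log u + lam * Real.log w = 0 := by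
      rw [← Real.log_rpow hw, ← Real.log_mul hu.ne' (Real.rpow_pos_of_pos hw lam).ne', hmul,
        Real.log_one]
    rw [Real.log_pow, Real.log_pow]
    push_cast
    linear_combination 2 * h
  have hu_le := Real.log_le_sub_one_of_pos (pow_pos hu 2)
  have hw_le := mul_le_mul_of_nonneg_left (Real.log_le_sub_one_of_pos (pow_pos hw 2)) hlam.le
  have hu_sq : u ^ 2 = 1 := by
    by_contra h
    linarith [Real.log_lt_sub_one_of_pos (pow_pos hu 2) h]
  have hw_sq : w ^ 2 = 1 := by
    by_contra h
    linarith [mul_lt_mul_of_pos_left (Real.log_lt_sub_one_of_pos (pow_pos hw 2) h) hlam]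
  exact ⟨(pow_eq_one_iff_of_nonneg hu.le two_ne_zero).1 hu_sq,
    (pow_eq_one_iff_of_nonneg hw.le two_ne_zero).1 hw_sq⟩

/-- The rattleback system with real parameter `lam`; the coordinates `0, 1, 2` are `x, y, z`. -/
structure IsRattlebackSolution (lam : ℝ) (γ : ℝ → EuclideanSpace ℝ (Fin 3)) : Prop where
  hasDerivAt_x (t : ℝ) : HasDerivAt (fun s => γ s 0) (lam * γ t 0 * γ t 2) t
  hasDerivAt_y (t : ℝ) : HasDerivAt (fun s => γ s 1) (-(γ t 1 * γ t 2)) t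
  hasDerivAt_z (t : ℝ) : HasDerivAt (fun s => γ s 2) (γ t 1 ^ 2 - lam * γ t 0 ^ 2) t

/-- The Casimir `x |y|^λ` of the rattleback system. The absolute value makes the real power
meaningful for negative `y`; for `λ ∈ ℕ` it agrees with `x y^λ` up to sign. -/
noncomputable def rattlebackCasimir (lam : ℝ) (v : EuclideanSpace ℝ (Fin 3)) : ℝ :=
  v 0 * |v 1| ^ lam

theorem continuous_rattlebackCasimir {lam : ℝ} (hlam : 0 ≤ lam) :
    Continuous (rattlebackCasimir lam) := by
  unfold rattlebackCasimir
  exact (by fun_prop : Continuous fun v : EuclideanSpace ℝ (Fin 3) => v 0).mul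
    ((by fun_prop : Continuous fun v : EuclideanSpace ℝ (Fin 3) => |v 1|).rpow_const
      fun _ => Or.inr hlam)

theorem euclidean_norm_sq_fin_three (v : EuclideanSpace ℝ (Fin 3)) :
    ‖v‖ ^ 2 = v 0 ^ 2 + v 1 ^ 2 + v 2 ^ 2 := by
  rw [EuclideanSpace.real_norm_sq_eq, Fin.sum_univ_three]

namespace IsRattlebackSolution

variable {lam : ℝ} {γ : ℝ → EuclideanSpace ℝ (Fin 3)}

theorem continuous (h : IsRattlebackSolution lam γ) : Continuous γ := by
  refine (PiLp.continuous_toLp 2 _).comp (continuous_pi fun i => ?_)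
  refine continuous_iff_continuousAt.2 fun t => ?_
  fin_cases i
  exacts [(h.hasDerivAt_x t).continuousAt, (h.hasDerivAt_y t).continuousAt,
    (h.hasDerivAt_z t).continuousAt]

theorem norm_eq (h : IsRattlebackSolution lam γ) (s t : ℝ) : ‖γ s‖ = ‖γ t‖ := by
  have hderiv (t : ℝ) : HasDerivAt (fun t => ‖γ t‖ ^ 2) 0 t := by
    simp only [euclidean_norm_sq_fin_three]
    refine ((((h.hasDerivAt_x t).fun_pow 2).fun_add ((h.hasDerivAt_y t).fun_pow 2)).fun_add
      ((h.hasDerivAt_z t).fun_pow 2)).congr_deriv ?_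
    push_cast
    ring
  have hsq : ‖γ s‖ ^ 2 = ‖γ t‖ ^ 2 := is_const_of_deriv_eq_zero
    (fun t => (hderiv t).differentiableAt) (fun t => (hderiv t).deriv) s t
  exact (sq_eq_sq₀ (norm_nonneg _) (norm_nonneg _)).1 hsq

theorem casimir_eq (h : IsRattlebackSolution lam γ) (s t : ℝ) :
    rattlebackCasimir lam (γ s) = rattlebackCasimir lam (γ t) := by
  have hz : Continuous fun t => γ t 2 := (PiLp.continuous_apply 2 _ 2).comp h.continuous
  have hx : γ s 0 = γ t 0 * Real.exp (lam * ∫ r in t..s, γ r 2) := by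
    rw [← intervalIntegral.integral_const_mul]
    exact eq_mul_exp_integral_of_hasDerivAt (hz.const_mul lam)
      (fun r => (h.hasDerivAt_x r).congr_deriv (by ring)) t s
  have hy : γ s 1 = γ t 1 * Real.exp (-∫ r in t..s, γ r 2) := by
    rw [← intervalIntegral.integral_neg]
    exact eq_mul_exp_integral_of_hasDerivAt hz.fun_neg
      (fun r => (h.hasDerivAt_y r).congr_deriv (by ring)) t s
  unfold rattlebackCasimir
  rw [hx, hy, abs_mul, Real.abs_exp, Real.mul_rpow (abs_nonneg _) (Real.exp_pos _).le,
    ← Real.exp_mul, mul_mul_mul_comm, ← Real.exp_add,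
    show lam * (∫ r in t..s, γ r 2) + -(∫ r in t..s, γ r 2) * lam = 0 by ring, Real.exp_zero,
    mul_one]

end IsRattlebackSolution

section LevelSet

variable {lam a b x y z : ℝ}

theorem eq_and_sq_eq_sq_of_energy_eq_of_casimir_eq_of_pos (hlam : 0 < lam) (ha : a ≠ 0)
    (hab : b ^ 2 = lam * a ^ 2)
    (henergy : x ^ 2 + y ^ 2 + z ^ 2 = a ^ 2 + b ^ 2)
    (hcasimir : x * |y| ^ lam = a * |b| ^ lam) : x = a ∧ y ^ 2 = b ^ 2 := by
  have ha_sq : 0 < a ^ 2 := by positivity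
  have hb : b ≠ 0 := sq_pos_iff.1 (hab ▸ mul_pos hlam ha_sq)
  have hb_rpow : 0 < |b| ^ lam := Real.rpow_pos_of_pos (abs_pos.2 hb) lam
  have hy : y ≠ 0 := by
    rintro rfl
    rw [abs_zero, Real.zero_rpow hlam.ne', mul_zero] at hcasimir
    exact mul_ne_zero ha hb_rpow.ne' hcasimir.symm
  have hmul : x / a * (|y| / |b|) ^ lam = 1 := by
    rw [Real.div_rpow (abs_nonneg y) (abs_nonneg b), div_mul_div_comm, hcasimir,
      div_self (mul_ne_zero ha hb_rpow.ne')]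
  have hsum : (x / a) ^ 2 + lam * (|y| / |b|) ^ 2 = (x ^ 2 + y ^ 2) / a ^ 2 := by
    rw [div_pow, div_pow, sq_abs, sq_abs, hab]
    field_simp
  have hle : (x / a) ^ 2 + lam * (|y| / |b|) ^ 2 ≤ 1 + lam := by
    rw [hsum, div_le_iff₀ ha_sq]
    linarith [sq_nonneg z]
  obtain ⟨hx, hy⟩ := eq_one_of_mul_rpow_eq_one_of_sq_add_mul_sq_le hlam
    (div_pos (abs_pos.2 hy) (abs_pos.2 hb)) hmul hle
  exact ⟨eq_of_div_eq_one hx, (sq_eq_sq_iff_abs_eq_abs _ _).2 (eq_of_div_eq_one hy)⟩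

theorem eq_and_sq_eq_sq_of_energy_eq_of_casimir_eq (hab : b ^ 2 = lam * a ^ 2)
    (henergy : x ^ 2 + y ^ 2 + z ^ 2 = a ^ 2 + b ^ 2)
    (hcasimir : x * |y| ^ lam = a * |b| ^ lam) : x = a ∧ y ^ 2 = b ^ 2 := by
  rcases eq_or_ne a 0 with rfl | ha
  · have hb : b ^ 2 = 0 := by simpa using hab
    exact ⟨sq_eq_zero_iff.1 (by nlinarith [hb]), by nlinarith [hb]⟩
  have hlam : 0 ≤ lam := nonneg_of_mul_nonneg_left (hab ▸ sq_nonneg b) (by positivity)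
  rcases hlam.eq_or_lt with rfl | hlam
  · have hx : x = a := by simpa only [Real.rpow_zero, mul_one] using hcasimir
    subst hx
    exact ⟨rfl, by nlinarith⟩
  · exact eq_and_sq_eq_sq_of_energy_eq_of_casimir_eq_of_pos hlam ha hab henergy hcasimir

end LevelSet

theorem eventually_eq_of_norm_eq_of_rattlebackCasimir_eq {lam : ℝ} {e : EuclideanSpace ℝ (Fin 3)}
    (hxy : e 1 ^ 2 = lam * e 0 ^ 2) (hz : e 2 = 0) :
    ∀ᶠ v in 𝓝 e, ‖v‖ = ‖e‖ → rattlebackCasimir lam v = rattlebackCasimir lam e → v = e := by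
  have hy_tendsto : Tendsto (fun v : EuclideanSpace ℝ (Fin 3) => v 1) (𝓝 e) (𝓝 (e 1)) :=
    (PiLp.continuous_apply 2 _ 1).continuousAt
  filter_upwards [hy_tendsto.eventually (eventually_nhds_eq_of_sq_eq_sq (e 1))]
    with v hnear hnorm hcasimir
  have henergy : v 0 ^ 2 + v 1 ^ 2 + v 2 ^ 2 = e 0 ^ 2 + e 1 ^ 2 := by
    rw [← euclidean_norm_sq_fin_three, hnorm, euclidean_norm_sq_fin_three, hz]
    ring
  obtain ⟨hx, hy_sq⟩ := eq_and_sq_eq_sq_of_energy_eq_of_casimir_eq hxy henergy hcasimir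
  have hvz : v 2 = 0 := sq_eq_zero_iff.1 (by rw [hx, hy_sq] at henergy; linarith)
  ext i
  fin_cases i
  exacts [hx, hnear hy_sq, hvz.trans hz.symm]

theorem rattleback_stable_equilibria_general {lam : ℝ} {e : EuclideanSpace ℝ (Fin 3)}
    (hxy : e 1 ^ 2 = lam * e 0 ^ 2) (hz : e 2 = 0) :
    IsLyapunovStable {γ | IsRattlebackSolution lam γ} e := by
  have hcont : ∀ γ ∈ {γ | IsRattlebackSolution lam γ}, ContinuousOn γ (Ici 0) :=
    fun γ hγ => hγ.continuous.continuousOn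
  by_cases hlam : 0 ≤ lam
  · refine isLyapunovStable_of_isolated_level (F := fun v => (‖v‖, rattlebackCasimir lam v))
      (continuous_norm.prodMk (continuous_rattlebackCasimir hlam)) hcont
      (fun γ hγ t _ => Prod.ext (hγ.norm_eq t 0) (hγ.casimir_eq t 0)) ?_
    filter_upwards [eventually_eq_of_norm_eq_of_rattlebackCasimir_eq hxy hz] with v hv hF
    exact dist_eq_zero.2 (hv (congrArg Prod.fst hF) (congrArg Prod.snd hF))
  · -- The Casimir is discontinuous here, but `e = 0` and the norm suffices.
    have hx : e 0 = 0 := by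
      by_contra hx
      exact absurd hxy (((mul_neg_of_neg_of_pos (not_le.1 hlam)
        (by positivity)).trans_le (sq_nonneg _)).ne')
    have hy : e 1 = 0 := by simpa [hx] using hxy
    have he : e = 0 := by
      ext i
      fin_cases i
      exacts [hx, hy, hz]
    subst he
    refine isLyapunovStable_of_isolated_level continuous_norm hcont
      (fun γ hγ t _ => hγ.norm_eq t 0) (Eventually.of_forall fun v hv => ?_)
    rw [dist_zero_right, hv, norm_zero]

theorem dist_vec3_eq_sqrt (x y z a b c : ℝ) :
    dist !₂[x, y, z] !₂[a, b, c] = √((x - a) ^ 2 + (y - b) ^ 2 + (z - c) ^ 2) := by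
  simp only [EuclideanSpace.dist_eq, Fin.sum_univ_three, Real.dist_eq, sq_abs]
  rfl

theorem IsLyapunovStable.rattleback_coordinates {lam a b c : ℝ}
    (h : IsLyapunovStable {γ | IsRattlebackSolution lam γ} !₂[a, b, c]) :
    ∀ ε > 0, ∃ δ > 0, ∀ x y z : ℝ → ℝ,
      (∀ t, HasDerivAt x (lam * x t * z t) t) →
      (∀ t, HasDerivAt y (-(y t * z t)) t) →
      (∀ t, HasDerivAt z (y t ^ 2 - lam * x t ^ 2) t) →
      √((x 0 - a) ^ 2 + (y 0 - b) ^ 2 + (z 0 - c) ^ 2) < δ →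
      ∀ t ≥ 0, √((x t - a) ^ 2 + (y t - b) ^ 2 + (z t - c) ^ 2) < ε := by
  simp only [← dist_vec3_eq_sqrt]
  intro ε hε
  obtain ⟨δ, hδ, hstable⟩ := h ε hε
  exact ⟨δ, hδ, fun x y z hx hy hz => hstable (fun t => !₂[x t, y t, z t]) ⟨hx, hy, hz⟩⟩

/-- The equilibria `e₊ = (M, M√λ, 0)` and `e₋ = (M, −M√λ, 0)` of the rattleback system
`ẋ = λxz, ẏ = −yz, ż = y² − λx²` (with `λ ≥ 2` a natural number) are Lyapunov stable. -/
theorem rattleback_stable_equilibria (lam : ℕ) (hlam : 2 ≤ lam) (M : ℝ)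
    (e : ℝ × ℝ × ℝ)
    (he : e = (M, M * Real.sqrt lam, 0) ∨ e = (M, -(M * Real.sqrt lam), 0)) :
    ∀ ε > (0 : ℝ), ∃ δ > (0 : ℝ), ∀ x y z : ℝ → ℝ,
      (∀ t : ℝ, HasDerivAt x ((lam : ℝ) * x t * z t) t) →
      (∀ t : ℝ, HasDerivAt y (-(y t * z t)) t) →
      (∀ t : ℝ, HasDerivAt z ((y t) ^ 2 - (lam : ℝ) * (x t) ^ 2) t) →
      Real.sqrt ((x 0 - e.1) ^ 2 + (y 0 - e.2.1) ^ 2 + (z 0 - e.2.2) ^ 2) < δ →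
      ∀ t ≥ (0 : ℝ),
        Real.sqrt ((x t - e.1) ^ 2 + (y t - e.2.1) ^ 2 + (z t - e.2.2) ^ 2) < ε := by
  refine (rattleback_stable_equilibria_general ?_ ?_).rattleback_coordinates <;>
    rcases he with rfl | rfl <;> simp [mul_pow, mul_comm]
end

section
/- Let λ ≥ 2 be a natural number and M ∈ ℝ with M ≠ 0. The equilibrium (0, 0, M) of the rattleback system is unstable: there exists ε > 0 such that for every δ > 0 there exist a solution (x(t), y(t), z(t)) of the rattleback system and a time t ≥ 0 with ‖(x(0), y(0), z(0)) − (0, 0, M)‖ < δ and ‖(x(t), y(t), z(t)) − (0, 0, M)‖ ≥ ε. -/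
/-!
Each of the planes `y = 0` and `x = 0` is invariant, and contains explicit orbits
`(M sech kt, 0, M tanh kt)`, with `k = -λM`, respectively `(0, M sech kt, M tanh kt)`, with `k = M`.
If `M > 0` the first, and if `M < 0` the second, has `k < 0` and hence emanates from `(0, 0, M)` as
`t → -∞`; it meets `z = 0` at `t = 0`. Started far enough back in time, such an orbit is arbitrarily
close to `(0, 0, M)` and yet later reaches distance at least `|M|`.
-/

open Filter Real Topology

theorem tendsto_cosh_atTop : Tendsto cosh atTop atTop := by
  refine tendsto_atTop_mono (fun x => ?_) (tendsto_exp_atTop.atTop_div_const two_pos)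
  rw [cosh_eq]
  linarith [exp_pos (-x)]

theorem tendsto_inv_cosh_atTop : Tendsto (fun x => (cosh x)⁻¹) atTop (𝓝 0) :=
  tendsto_cosh_atTop.inv_tendsto_atTop

theorem tanh_eq_one_sub_exp_neg_mul_inv_cosh (x : ℝ) : tanh x = 1 - exp (-x) * (cosh x)⁻¹ := by
  rw [tanh_eq_sinh_div_cosh, ← cosh_sub_sinh]
  field [(cosh_pos x).ne']

theorem tendsto_tanh_atTop : Tendsto tanh atTop (𝓝 1) := by
  have h : Tendsto (fun x => 1 - exp (-x) * (cosh x)⁻¹) atTop (𝓝 (1 - 0 * 0)) :=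
    (tendsto_exp_neg_atTop_nhds_zero.mul tendsto_inv_cosh_atTop).const_sub 1
  simpa [← tanh_eq_one_sub_exp_neg_mul_inv_cosh] using h

theorem hasDerivAt_inv_cosh (x : ℝ) :
    HasDerivAt (fun x => (cosh x)⁻¹) (-((cosh x)⁻¹ * tanh x)) x := by
  refine ((hasDerivAt_cosh x).fun_inv (cosh_pos x).ne').congr_deriv ?_
  rw [tanh_eq_sinh_div_cosh]
  ring

theorem hasDerivAt_tanh (x : ℝ) : HasDerivAt tanh ((cosh x)⁻¹ ^ 2) x := by
  have hquot := (hasDerivAt_sinh x).fun_div (hasDerivAt_cosh x) (cosh_pos x).ne'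
  simp only [← tanh_eq_sinh_div_cosh] at hquot
  refine hquot.congr_deriv ?_
  rw [← sq, ← sq, cosh_sq_sub_sinh_sq, one_div, inv_pow]

theorem hasDerivAt_const_mul_inv_cosh_const_mul (a k s : ℝ) :
    HasDerivAt (fun s => a * (cosh (k * s))⁻¹) (-k * (a * (cosh (k * s))⁻¹) * tanh (k * s)) s := by
  have hcomp := (hasDerivAt_inv_cosh (k * s)).comp s (hasDerivAt_const_mul k)
  exact (hcomp.const_mul a).congr_deriv (by ring)

theorem hasDerivAt_const_mul_tanh_const_mul (a k s : ℝ) :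
    HasDerivAt (fun s => a * tanh (k * s)) (a * k * (cosh (k * s))⁻¹ ^ 2) s := by
  have hcomp := (hasDerivAt_tanh (k * s)).comp s (hasDerivAt_const_mul k)
  exact (hcomp.const_mul a).congr_deriv (by ring)

theorem tendsto_const_mul_inv_cosh_const_mul_atBot (a : ℝ) {k : ℝ} (hk : k < 0) :
    Tendsto (fun s => a * (cosh (k * s))⁻¹) atBot (𝓝 0) := by
  simpa using (tendsto_inv_cosh_atTop.comp (tendsto_id.const_mul_atBot_of_neg hk)).const_mul a

theorem tendsto_const_mul_tanh_const_mul_atBot (a : ℝ) {k : ℝ} (hk : k < 0) :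
    Tendsto (fun s => a * tanh (k * s)) atBot (𝓝 a) := by
  simpa using (tendsto_tanh_atTop.comp (tendsto_id.const_mul_atBot_of_neg hk)).const_mul a

theorem exists_nonpos_sqrt_lt_of_tendsto_atBot {x y z : ℝ → ℝ} {a b c δ : ℝ}
    (hx : Tendsto x atBot (𝓝 a)) (hy : Tendsto y atBot (𝓝 b)) (hz : Tendsto z atBot (𝓝 c))
    (hδ : 0 < δ) : ∃ s ≤ 0, √((x s - a) ^ 2 + (y s - b) ^ 2 + (z s - c) ^ 2) < δ := by
  have hdist : Tendsto (fun s => √((x s - a) ^ 2 + (y s - b) ^ 2 + (z s - c) ^ 2)) atBot (𝓝 0) := by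
    simpa using ((((hx.sub_const a).pow 2).add ((hy.sub_const b).pow 2)).add
      ((hz.sub_const c).pow 2)).sqrt
  exact ((eventually_le_atBot 0).and (hdist.eventually_lt_const hδ)).exists

/-- A global solution of the rattleback system `ẋ = λxz, ẏ = −yz, ż = y² − λx²`, given by its
coordinates; the parameter `λ` may be any real number. -/
structure IsRattlebackSolution_s5 (lam : ℝ) (x y z : ℝ → ℝ) : Prop where
  hasDerivAt_x : ∀ s, HasDerivAt x (lam * x s * z s) s
  hasDerivAt_y : ∀ s, HasDerivAt y (-(y s * z s)) s
  hasDerivAt_z : ∀ s, HasDerivAt z (y s ^ 2 - lam * x s ^ 2) s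

theorem IsRattlebackSolution_s5.comp_add_const {lam : ℝ} {x y z : ℝ → ℝ}
    (h : IsRattlebackSolution_s5 lam x y z) (c : ℝ) :
    IsRattlebackSolution_s5 lam (fun s => x (s + c)) (fun s => y (s + c)) (fun s => z (s + c)) where
  hasDerivAt_x s := (h.hasDerivAt_x (s + c)).comp_add_const s c
  hasDerivAt_y s := (h.hasDerivAt_y (s + c)).comp_add_const s c
  hasDerivAt_z s := (h.hasDerivAt_z (s + c)).comp_add_const s c

theorem isRattlebackSolution_sech_zero_tanh (lam M : ℝ) :
    IsRattlebackSolution_s5 lam (fun s => M * (cosh (-(lam * M) * s))⁻¹) (fun _ => 0)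
      (fun s => M * tanh (-(lam * M) * s)) where
  hasDerivAt_x s := (hasDerivAt_const_mul_inv_cosh_const_mul M _ s).congr_deriv (by ring)
  hasDerivAt_y s := (hasDerivAt_const s 0).congr_deriv (by ring)
  hasDerivAt_z s := (hasDerivAt_const_mul_tanh_const_mul M _ s).congr_deriv (by ring)

theorem isRattlebackSolution_zero_sech_tanh (lam M : ℝ) :
    IsRattlebackSolution_s5 lam (fun _ => 0) (fun s => M * (cosh (M * s))⁻¹)
      (fun s => M * tanh (M * s)) where
  hasDerivAt_x s := (hasDerivAt_const s 0).congr_deriv (by ring)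
  hasDerivAt_y s := (hasDerivAt_const_mul_inv_cosh_const_mul M _ s).congr_deriv (by ring)
  hasDerivAt_z s := (hasDerivAt_const_mul_tanh_const_mul M _ s).congr_deriv (by ring)

theorem exists_isRattlebackSolution_tendsto_atBot {lam M : ℝ} (hlam : 0 < lam) (hM : M ≠ 0) :
    ∃ x y z, IsRattlebackSolution_s5 lam x y z ∧ z 0 = 0 ∧
      Tendsto x atBot (𝓝 0) ∧ Tendsto y atBot (𝓝 0) ∧ Tendsto z atBot (𝓝 M) := by
  rcases hM.lt_or_gt with hneg | hpos
  · exact ⟨_, _, _, isRattlebackSolution_zero_sech_tanh lam M, by simp, tendsto_const_nhds,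
      tendsto_const_mul_inv_cosh_const_mul_atBot M hneg,
      tendsto_const_mul_tanh_const_mul_atBot M hneg⟩
  · have hk : -(lam * M) < 0 := neg_neg_of_pos (mul_pos hlam hpos)
    exact ⟨_, _, _, isRattlebackSolution_sech_zero_tanh lam M, by simp,
      tendsto_const_mul_inv_cosh_const_mul_atBot M hk, tendsto_const_nhds,
      tendsto_const_mul_tanh_const_mul_atBot M hk⟩

theorem rattleback_unstable_equilibria_general {lam M : ℝ} (hlam : 0 < lam) (hM : M ≠ 0) :
    ∃ ε > (0 : ℝ), ∀ δ > (0 : ℝ), ∃ x y z : ℝ → ℝ, ∃ t : ℝ, t ≥ 0 ∧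
      (∀ s : ℝ, HasDerivAt x (lam * x s * z s) s) ∧
      (∀ s : ℝ, HasDerivAt y (-(y s * z s)) s) ∧
      (∀ s : ℝ, HasDerivAt z ((y s) ^ 2 - lam * (x s) ^ 2) s) ∧
      Real.sqrt ((x 0) ^ 2 + (y 0) ^ 2 + (z 0 - M) ^ 2) < δ ∧
      Real.sqrt ((x t) ^ 2 + (y t) ^ 2 + (z t - M) ^ 2) ≥ ε := by
  refine ⟨|M|, abs_pos.mpr hM, fun δ hδ => ?_⟩
  obtain ⟨x, y, z, hsol, hz0, hx, hy, hz⟩ := exists_isRattlebackSolution_tendsto_atBot hlam hM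
  obtain ⟨s, hs, hclose⟩ := exists_nonpos_sqrt_lt_of_tendsto_atBot hx hy hz hδ
  have hsol' := hsol.comp_add_const s
  refine ⟨_, _, _, -s, neg_nonneg.mpr hs, hsol'.hasDerivAt_x, hsol'.hasDerivAt_y,
    hsol'.hasDerivAt_z, by simpa using hclose, abs_le_sqrt ?_⟩
  simp only [neg_add_cancel, hz0, zero_sub, neg_sq]
  exact le_add_of_nonneg_left (by positivity)

/-- For `M ≠ 0`, the equilibrium `(0, 0, M)` of the rattleback system
`ẋ = λxz, ẏ = −yz, ż = y² − λx²` (with `λ ≥ 2` a natural number) is unstable. -/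
theorem rattleback_unstable_equilibria (lam : ℕ) (hlam : 2 ≤ lam) (M : ℝ) (hM : M ≠ 0) :
    ∃ ε > (0 : ℝ), ∀ δ > (0 : ℝ), ∃ x y z : ℝ → ℝ, ∃ t : ℝ, t ≥ 0 ∧
      (∀ s : ℝ, HasDerivAt x ((lam : ℝ) * x s * z s) s) ∧
      (∀ s : ℝ, HasDerivAt y (-(y s * z s)) s) ∧
      (∀ s : ℝ, HasDerivAt z ((y s) ^ 2 - (lam : ℝ) * (x s) ^ 2) s) ∧
      Real.sqrt ((x 0) ^ 2 + (y 0) ^ 2 + (z 0 - M) ^ 2) < δ ∧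
      Real.sqrt ((x t) ^ 2 + (y t) ^ 2 + (z t - M) ^ 2) ≥ ε :=
  rattleback_unstable_equilibria_general (Nat.cast_pos.mpr (two_pos.trans_le hlam)) hM
end

section
/- Let λ ≥ 2 be a natural number and M ∈ ℝ with M ≠ 0, and set e₊ = (|M|, |M|√λ, 0) and T₀ = π√2 / (|M|·√(λ(λ+1))). For every η > 0 there exist a real number T > 0 with |T − T₀| < η and a nonconstant T-periodic solution (x(t), y(t), z(t)) of the rattleback system whose orbit is contained in the open ball of radius η centered at e₊, i.e. ‖(x(t), y(t), z(t)) − e₊‖ < η for all t ∈ ℝ. -/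
/-!
On a level surface of the first integral `x y ^ lam` write `x = a exp (lam w)` and
`y = a √lam exp (-w)`. The rattleback system then becomes Newton's equation `w'' = -f w` with
`w' = z`, for which `w = 0` is a nondegenerate minimum of the potential `∫₀ʷ f`. In a coordinate `u`
with `u ^ 2 / 2 = ∫₀ʷ f` the energy levels are the circles `u = r sin θ`, `z = r cos θ`, and only
the scalar equation `θ' = v (r sin θ)`, where `v = du/dw`, remains; since `v` is positive, `θ` gains
`2π` in finite time. As `r → 0` this time tends to `2π / v 0`, the period of the linearization.
-/

open Filter Topology Metric Function intervalIntegral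

section ScalarEquation

theorem exists_surjective_hasDerivAt_of_periodic {g : ℝ → ℝ} {p : ℝ} (hg : Continuous g)
    (hpos : ∀ s, 0 < g s) (hper : Periodic g p) (hp : 0 < p) :
    ∃ θ : ℝ → ℝ, Surjective θ ∧ (∀ t, HasDerivAt θ (g (θ t)) t) ∧
      ∀ t, θ (t + ∫ s in (0 : ℝ)..p, (g s)⁻¹) = θ t + p := by
  have hinv : Continuous fun s ↦ (g s)⁻¹ := hg.inv₀ fun s ↦ (hpos s).ne'
  have hinv_pos : ∀ s, 0 < (g s)⁻¹ := fun s ↦ inv_pos.2 (hpos s)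
  have hinv_per : Periodic (fun s ↦ (g s)⁻¹) p := fun s ↦ congrArg (·⁻¹) (hper s)
  have hint (a b : ℝ) : IntervalIntegrable (fun s ↦ (g s)⁻¹) MeasureTheory.volume a b :=
    hinv.intervalIntegrable a b
  -- Separation of variables: `θ` is the inverse of the elapsed time `τ`.
  let τ : ℝ → ℝ := fun x ↦ ∫ s in (0 : ℝ)..x, (g s)⁻¹
  have hτ (x : ℝ) : HasDerivAt τ (g x)⁻¹ x := (hinv.integral_hasStrictDerivAt 0 x).hasDerivAt
  have hmono : StrictMono τ := strictMono_of_hasDerivAt_pos hτ hinv_pos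
  have hcont : Continuous τ := continuous_iff_continuousAt.2 fun x ↦ (hτ x).continuousAt
  have hsurj : Surjective τ := hcont.surjective
    (hinv_per.tendsto_atTop_intervalIntegral_of_pos' (hint _ _) hinv_pos hp)
    (hinv_per.tendsto_atBot_intervalIntegral_of_pos' (hint _ _) hinv_pos hp)
  let e := hmono.orderIsoOfSurjective τ hsurj
  have he (t : ℝ) : τ (e.symm t) = t := e.apply_symm_apply t
  refine ⟨e.symm, e.symm.surjective, fun t ↦ ?_, fun t ↦ hmono.injective ?_⟩
  · simpa using (hτ _).of_local_left_inverse e.symm.continuous.continuousAt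
      (hinv_pos _).ne' (Eventually.of_forall he)
  · calc τ (e.symm (t + τ p)) = τ (e.symm t) + τ p := by rw [he, he]
      _ = τ (e.symm t + p) := by
        simpa using (hinv_per.intervalIntegral_add_eq_add 0 (e.symm t) hint).symm

theorem tendsto_intervalIntegral_comp_mul {E : Type*} [NormedAddCommGroup E] [NormedSpace ℝ E]
    [CompleteSpace E] {g : ℝ → E} {φ : ℝ → ℝ} (hg : ∀ᶠ u in 𝓝 0, ContinuousAt g u)
    (hφ : Continuous φ) (a b : ℝ) :
    Tendsto (fun r ↦ ∫ s in a..b, g (r * φ s)) (𝓝 0) (𝓝 ((b - a) • g 0)) := by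
  have huniform {P : ℝ → Prop} (hP : ∀ᶠ u in 𝓝 0, P u) :
      ∀ᶠ r in 𝓝 (0 : ℝ), ∀ s ∈ Set.uIcc a b, P (r * φ s) := by
    refine isCompact_uIcc.eventually_forall_of_forall_eventually fun s _ ↦ ?_
    have hmul : Continuous fun q : ℝ × ℝ ↦ q.1 * φ q.2 := by fun_prop
    exact (hmul.tendsto' (0, s) 0 (zero_mul _)).eventually hP
  have hbound : ∀ᶠ u in 𝓝 0, ‖g u‖ ≤ ‖g 0‖ + 1 :=
    hg.self_of_nhds.norm.eventually_le_const (lt_add_one _)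
  have hlim (s : ℝ) : Tendsto (fun r ↦ g (r * φ s)) (𝓝 0) (𝓝 (g 0)) :=
    hg.self_of_nhds.tendsto.comp <|
      Continuous.tendsto' (by fun_prop : Continuous fun r ↦ r * φ s) 0 0 (zero_mul _)
  rw [← integral_const]
  refine tendsto_integral_filter_of_dominated_convergence (fun _ ↦ ‖g 0‖ + 1) ?_ ?_
    intervalIntegrable_const (Eventually.of_forall fun s _ ↦ hlim s)
  · filter_upwards [huniform hg] with r hr
    have hcont : ContinuousOn (fun s ↦ g (r * φ s)) (Set.uIcc a b) := fun s hs ↦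
      ((hr s hs).comp (f := fun s ↦ r * φ s) (by fun_prop)).continuousWithinAt
    exact (hcont.mono Set.uIoc_subset_uIcc).aestronglyMeasurable measurableSet_uIoc
  · filter_upwards [huniform hbound] with r hr
    exact Eventually.of_forall fun s hs ↦ hr s (Set.uIoc_subset_uIcc hs)

end ScalarEquation

section Derivatives

theorem continuous_dslope {𝕜 E : Type*} [NontriviallyNormedField 𝕜] [NormedAddCommGroup E]
    [NormedSpace 𝕜 E] {f : 𝕜 → E} {a : 𝕜} (hf : Continuous f) (hd : DifferentiableAt 𝕜 f a) :
    Continuous (dslope f a) :=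
  continuousOn_univ.1 <| (continuousOn_dslope univ_mem).2 ⟨hf.continuousOn, hd⟩

theorem hasDerivAt_self_smul {𝕜 E : Type*} [NontriviallyNormedField 𝕜] [NormedAddCommGroup E]
    [NormedSpace 𝕜 E] {q : 𝕜 → E} (hq : ContinuousAt q 0) :
    HasDerivAt (fun w ↦ w • q w) (q 0) 0 := by
  rw [hasDerivAt_iff_tendsto_slope_zero]
  refine hq.continuousWithinAt.tendsto.congr' ?_
  filter_upwards [self_mem_nhdsWithin] with w hw
  rw [zero_add, zero_smul, sub_zero, inv_smul_smul₀ hw]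

theorem exists_local_inverse_hasDerivAt {𝕜 : Type*} [RCLike 𝕜] {h h' : 𝕜 → 𝕜} {a : 𝕜}
    (hh : ∀ᶠ w in 𝓝 a, HasDerivAt h (h' w) w) (hcont : ContinuousAt h' a) (hne : h' a ≠ 0) :
    ∃ k : 𝕜 → 𝕜, k (h a) = a ∧
      ∀ᶠ u in 𝓝 (h a), h (k u) = u ∧ HasDerivAt k (h' (k u))⁻¹ u := by
  have hstrict := hasStrictDerivAt_of_hasDerivAt_of_continuousAt hh hcont
  let e := (hstrict.hasStrictFDerivAt_equiv hne).toOpenPartialHomeomorph h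
  have hsource : a ∈ e.source := HasStrictFDerivAt.mem_toOpenPartialHomeomorph_source _
  have hka : e.symm (h a) = a := e.left_inv hsource
  have hk : Tendsto e.symm (𝓝 (h a)) (𝓝 a) := e.tendsto_symm hsource
  refine ⟨e.symm, hka, ?_⟩
  filter_upwards [e.open_target.mem_nhds (e.map_source hsource), hk.eventually hh,
    hk.eventually (hcont.eventually_ne hne)] with u hu hder hu_ne
  exact ⟨e.right_inv hu, e.hasDerivAt_symm hu hu_ne hder⟩

end Derivatives

section PotentialWell

/-- The quotient `V w / w ^ 2` for the potential `V w = ∫₀ʷ f`, written as an integral so that it is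
also meaningful at `w = 0`; it is meant for `f 0 = 0`. -/
noncomputable def scaledPotential (f : ℝ → ℝ) (w : ℝ) : ℝ :=
  ∫ σ in (0 : ℝ)..1, σ * dslope f 0 (σ * w)

/-- The coordinate `u = ±√(2 V w)`, with the sign of `w`, in which the potential `V w = ∫₀ʷ f`
becomes `u ^ 2 / 2`. -/
noncomputable def energyCoord (f : ℝ → ℝ) (w : ℝ) : ℝ :=
  w * √(2 * scaledPotential f w)

/-- The derivative `du/dw` of `energyCoord f`. -/
noncomputable def energyCoordDeriv (f : ℝ → ℝ) (w : ℝ) : ℝ :=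
  dslope f 0 w / √(2 * scaledPotential f w)

variable {f : ℝ → ℝ}

theorem mul_dslope_zero (hf0 : f 0 = 0) (w : ℝ) : w * dslope f 0 w = f w := by
  simpa [hf0] using sub_smul_dslope f 0 w

theorem continuous_scaledPotential (hf : Continuous f) (hd : DifferentiableAt ℝ f 0) :
    Continuous (scaledPotential f) := by
  have hslope := continuous_dslope hf hd
  unfold scaledPotential
  fun_prop

theorem scaledPotential_zero (f : ℝ → ℝ) : scaledPotential f 0 = deriv f 0 / 2 := by
  calc scaledPotential f 0 = (∫ σ in (0 : ℝ)..1, σ) * deriv f 0 := by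
        simp only [scaledPotential, mul_zero, dslope_same, integral_mul_const]
    _ = deriv f 0 / 2 := by rw [integral_id]; ring

theorem sq_mul_scaledPotential (hf0 : f 0 = 0) (w : ℝ) :
    w ^ 2 * scaledPotential f w = ∫ s in (0 : ℝ)..w, f s := by
  calc w ^ 2 * scaledPotential f w
      = w * ∫ σ in (0 : ℝ)..1, w * σ * dslope f 0 (w * σ) := by
        rw [scaledPotential, sq, mul_assoc, ← integral_const_mul]
        simp only [mul_assoc, mul_comm w]
    _ = w * ∫ σ in (0 : ℝ)..1, f (w * σ) := by simp only [mul_dslope_zero hf0]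
    _ = ∫ s in (0 : ℝ)..w, f s := by simp

theorem hasDerivAt_energyCoord_of_ne (hf : Continuous f) (hf0 : f 0 = 0) {w : ℝ} (hw : w ≠ 0)
    (hpos : 0 < scaledPotential f w) : HasDerivAt (energyCoord f) (energyCoordDeriv f w) w := by
  have hV : HasDerivAt (fun x ↦ ∫ s in (0 : ℝ)..x, f s) (f w) w :=
    (hf.integral_hasStrictDerivAt 0 w).hasDerivAt
  have heq : scaledPotential f =ᶠ[𝓝 w] fun x ↦ (∫ s in (0 : ℝ)..x, f s) / x ^ 2 := by
    filter_upwards [eventually_ne_nhds hw] with x hx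
    rw [← sq_mul_scaledPotential hf0, mul_div_cancel_left₀ _ (pow_ne_zero 2 hx)]
  have hscaled := (hV.div (hasDerivAt_pow 2 w) (pow_ne_zero 2 hw)).congr_of_eventuallyEq heq
  have hroot := (hscaled.const_mul 2).sqrt (by positivity)
  refine ((hasDerivAt_id w).mul hroot).congr_deriv ?_
  have hsq : √(2 * scaledPotential f w) ^ 2 = 2 * scaledPotential f w :=
    Real.sq_sqrt (by positivity)
  rw [energyCoordDeriv, ← sq_mul_scaledPotential hf0, ← mul_dslope_zero hf0 w]
  simp only [id_eq]
  field_simp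
  rw [hsq]
  ring

theorem hasDerivAt_energyCoord_zero (hf : Continuous f) (hd : DifferentiableAt ℝ f 0) :
    HasDerivAt (energyCoord f) (√(deriv f 0)) 0 := by
  have hq : Continuous fun w ↦ √(2 * scaledPotential f w) :=
    ((continuous_scaledPotential hf hd).const_mul 2).sqrt
  have hq0 : √(2 * scaledPotential f 0) = √(deriv f 0) := by
    rw [scaledPotential_zero, mul_div_cancel₀ _ two_ne_zero]
  exact hq0 ▸ hasDerivAt_self_smul hq.continuousAt

theorem energyCoordDeriv_zero (f : ℝ → ℝ) : energyCoordDeriv f 0 = √(deriv f 0) := by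
  rw [energyCoordDeriv, dslope_same, scaledPotential_zero, mul_div_cancel₀ _ two_ne_zero,
    Real.div_sqrt]

theorem energyCoord_mul_energyCoordDeriv (hf0 : f 0 = 0) {w : ℝ} (hpos : 0 < scaledPotential f w) :
    energyCoord f w * energyCoordDeriv f w = f w := by
  rw [energyCoord, energyCoordDeriv, ← mul_dslope_zero hf0 w]
  field_simp

theorem continuousAt_energyCoordDeriv (hf : Continuous f) (hd : DifferentiableAt ℝ f 0) {w : ℝ}
    (hpos : 0 < scaledPotential f w) : ContinuousAt (energyCoordDeriv f) w :=
  (continuous_dslope hf hd).continuousAt.div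
    ((continuous_scaledPotential hf hd).const_mul 2).sqrt.continuousAt (by positivity)

theorem eventually_scaledPotential_pos (hf : Continuous f) (hpos : 0 < deriv f 0) :
    ∀ᶠ w in 𝓝 0, 0 < scaledPotential f w := by
  have hd := differentiableAt_of_deriv_ne_zero hpos.ne'
  refine (continuous_scaledPotential hf hd).continuousAt.eventually_const_lt ?_
  rw [scaledPotential_zero]
  positivity

theorem eventually_hasDerivAt_energyCoord (hf : Continuous f) (hf0 : f 0 = 0)
    (hpos : 0 < deriv f 0) :
    ∀ᶠ w in 𝓝 0, HasDerivAt (energyCoord f) (energyCoordDeriv f w) w := by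
  have hd := differentiableAt_of_deriv_ne_zero hpos.ne'
  filter_upwards [eventually_scaledPotential_pos hf hpos] with w hw
  rcases eq_or_ne w 0 with rfl | hne
  · exact energyCoordDeriv_zero f ▸ hasDerivAt_energyCoord_zero hf hd
  · exact hasDerivAt_energyCoord_of_ne hf hf0 hne hw

/-- Near `u`, the function `k` expresses position in terms of an energy coordinate on the potential
well of `f`, in which the energy of a solution of `w' = z`, `z' = -f w` is `(u ^ 2 + z ^ 2) / 2`;
`v` is `du/dw` as a function of `u`. -/
structure IsEnergyChartAt (f k v : ℝ → ℝ) (u : ℝ) : Prop where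
  hasDerivAt : HasDerivAt k (v u)⁻¹ u
  continuousAt : ContinuousAt v u
  speed_pos : 0 < v u
  force_eq : f (k u) = u * v u

theorem exists_isEnergyChartAt (hf : Continuous f) (hf0 : f 0 = 0) (hpos : 0 < deriv f 0) :
    ∃ k v : ℝ → ℝ, k 0 = 0 ∧ v 0 = √(deriv f 0) ∧ ∀ᶠ u in 𝓝 0, IsEnergyChartAt f k v u := by
  have hd := differentiableAt_of_deriv_ne_zero hpos.ne'
  have hP := eventually_scaledPotential_pos hf hpos
  have hcont := continuousAt_energyCoordDeriv hf hd hP.self_of_nhds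
  have hv0 : 0 < energyCoordDeriv f 0 := by
    rw [energyCoordDeriv_zero]
    positivity
  obtain ⟨k, hk0, hk⟩ := exists_local_inverse_hasDerivAt
    (eventually_hasDerivAt_energyCoord hf hf0 hpos) hcont hv0.ne'
  have h0 : energyCoord f 0 = 0 := zero_mul _
  rw [h0] at hk0 hk
  have hktendsto : Tendsto k (𝓝 0) (𝓝 0) := by
    simpa only [hk0] using hk.self_of_nhds.2.continuousAt.tendsto
  refine ⟨k, fun u ↦ energyCoordDeriv f (k u), hk0, ?_, ?_⟩
  · simp only [hk0, energyCoordDeriv_zero]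
  · filter_upwards [hk, hktendsto.eventually hP,
      hktendsto.eventually (hcont.eventually_const_lt hv0)] with u ⟨hinv, hder⟩ hPu hvu
    refine ⟨hder, ?_, hvu, ?_⟩
    · exact (continuousAt_energyCoordDeriv hf hd hPu).comp hder.continuousAt
    · rw [← energyCoord_mul_energyCoordDeriv hf0 hPu, hinv]

end PotentialWell

section Oscillation

/-- `w` (position) and `z` (velocity) form a `T`-periodic solution of `w' = z`, `z' = -f w` which is
not an equilibrium. -/
structure IsPeriodicOscillation (f : ℝ → ℝ) (T : ℝ) (w z : ℝ → ℝ) : Prop where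
  hasDerivAt_position (t : ℝ) : HasDerivAt w (z t) t
  hasDerivAt_velocity (t : ℝ) : HasDerivAt z (-f (w t)) t
  periodic_position : Periodic w T
  periodic_velocity : Periodic z T
  velocity_nonconstant : ∃ t s, z t ≠ z s

variable {f : ℝ → ℝ}

theorem exists_isPeriodicOscillation_of_isEnergyChartAt {k v : ℝ → ℝ} {r : ℝ} (hr : r ≠ 0)
    (hchart : ∀ s, IsEnergyChartAt f k v (r * Real.sin s)) :
    ∃ θ : ℝ → ℝ, IsPeriodicOscillation f (∫ s in (0 : ℝ)..2 * Real.pi, (v (r * Real.sin s))⁻¹)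
      (fun t ↦ k (r * Real.sin (θ t))) (fun t ↦ r * Real.cos (θ t)) := by
  have hv : Continuous fun s ↦ v (r * Real.sin s) := continuous_iff_continuousAt.2 fun s ↦
    (hchart s).continuousAt.comp (f := fun s ↦ r * Real.sin s) (by fun_prop)
  obtain ⟨θ, hsurj, hθ, hperiod⟩ := exists_surjective_hasDerivAt_of_periodic hv
    (fun s ↦ (hchart s).speed_pos) (fun s ↦ by simp only [Real.sin_add_two_pi]) Real.two_pi_pos
  refine ⟨θ, fun t ↦ ?_, fun t ↦ ?_, fun t ↦ ?_, fun t ↦ ?_, ?_⟩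
  · have hu := (hθ t).sin.const_mul r
    refine ((hchart (θ t)).hasDerivAt.comp t hu).congr_deriv ?_
    have hne := (hchart (θ t)).speed_pos.ne'
    field_simp
  · refine ((hθ t).cos.const_mul r).congr_deriv ?_
    rw [(hchart (θ t)).force_eq]
    ring
  · simp only [hperiod, Real.sin_add_two_pi]
  · simp only [hperiod, Real.cos_add_two_pi]
  · obtain ⟨t, ht⟩ := hsurj 0
    obtain ⟨s, hs⟩ := hsurj Real.pi
    refine ⟨t, s, fun h ↦ hr ?_⟩
    rw [ht, hs, Real.cos_zero, Real.cos_pi] at h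
    linarith

theorem exists_isPeriodicOscillation_near (hf : Continuous f) (hf0 : f 0 = 0)
    (hpos : 0 < deriv f 0) {N : Set ℝ} (hN : N ∈ 𝓝 (2 * Real.pi / √(deriv f 0)))
    {U : Set (ℝ × ℝ)} (hU : U ∈ 𝓝 (0, 0)) :
    ∃ T ∈ N, ∃ w z : ℝ → ℝ, IsPeriodicOscillation f T w z ∧ ∀ t, (w t, z t) ∈ U := by
  obtain ⟨k, v, hk0, hv0, hchart⟩ := exists_isEnergyChartAt hf hf0 hpos
  have hperiod : Tendsto (fun r ↦ ∫ s in (0 : ℝ)..2 * Real.pi, (v (r * Real.sin s))⁻¹) (𝓝 0)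
      (𝓝 (2 * Real.pi / √(deriv f 0))) := by
    have hinv : ∀ᶠ u in 𝓝 0, ContinuousAt (fun u ↦ (v u)⁻¹) u :=
      hchart.mono fun u hu ↦ hu.continuousAt.inv₀ hu.speed_pos.ne'
    simpa only [sub_zero, hv0, smul_eq_mul, ← div_eq_mul_inv] using
      tendsto_intervalIntegral_comp_mul hinv Real.continuous_sin 0 (2 * Real.pi)
  have hstay : ∀ᶠ q : ℝ × ℝ in 𝓝 (0, 0), IsEnergyChartAt f k v q.1 ∧ (k q.1, q.2) ∈ U := by
    have hk : Tendsto k (𝓝 0) (𝓝 0) := by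
      simpa only [hk0] using hchart.self_of_nhds.hasDerivAt.continuousAt.tendsto
    have hu : Tendsto (Prod.fst : ℝ × ℝ → ℝ) (𝓝 (0, 0)) (𝓝 0) := continuous_fst.tendsto (0, 0)
    have hz : Tendsto (Prod.snd : ℝ × ℝ → ℝ) (𝓝 (0, 0)) (𝓝 0) := continuous_snd.tendsto (0, 0)
    exact (hu.eventually hchart).and (((hk.comp hu).prodMk_nhds hz).eventually hU)
  obtain ⟨r, ⟨hrN, hball⟩, hr : 0 < r⟩ := (((hperiod.eventually hN).and
    (eventually_closedBall_subset hstay)).filter_mono nhdsWithin_le_nhds |>.and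
      (self_mem_nhdsWithin (s := Set.Ioi 0))).exists
  have hcircle (s : ℝ) : (r * Real.sin s, r * Real.cos s) ∈ closedBall ((0, 0) : ℝ × ℝ) r := by
    rw [← closedBall_prod_same, Set.mem_prod, mem_closedBall_zero_iff,
      mem_closedBall_zero_iff, Real.norm_eq_abs, Real.norm_eq_abs, abs_mul, abs_mul, abs_of_pos hr]
    exact ⟨mul_le_of_le_one_right hr.le (Real.abs_sin_le_one s),
      mul_le_of_le_one_right hr.le (Real.abs_cos_le_one s)⟩
  obtain ⟨θ, hθ⟩ := exists_isPeriodicOscillation_of_isEnergyChartAt hr.ne'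
    fun s ↦ (hball (hcircle s)).1
  exact ⟨_, hrN, _, _, hθ, fun t ↦ (hball (hcircle (θ t))).2⟩

end Oscillation

section Rattleback

/-- The coordinate `x` along the curve where the first integral `x y ^ lam` has its value at
`e₊ = (a, a √lam, 0)`; the parameter `w` vanishes at `e₊`. -/
noncomputable def leafX (a lam w : ℝ) : ℝ := a * Real.exp (lam * w)

/-- The coordinate `y` along the curve parametrized by `leafX`. -/
noncomputable def leafY (a lam w : ℝ) : ℝ := a * √lam * Real.exp (-w)

/-- The force `f` for which the rattleback system on the surface parametrized by `leafX` and `leafY`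
reads `w' = z`, `z' = -f w`. -/
noncomputable def leafForce (a lam w : ℝ) : ℝ := lam * leafX a lam w ^ 2 - leafY a lam w ^ 2

variable (a lam w : ℝ)

theorem hasDerivAt_leafX : HasDerivAt (leafX a lam) (lam * leafX a lam w) w := by
  refine (((hasDerivAt_id w).const_mul lam).exp.const_mul a).congr_deriv ?_
  simp only [leafX, id_eq]
  ring

theorem hasDerivAt_leafY : HasDerivAt (leafY a lam) (-leafY a lam w) w := by
  refine ((hasDerivAt_neg w).exp.const_mul (a * √lam)).congr_deriv ?_
  simp only [leafY]
  ring

theorem hasDerivAt_leafForce : HasDerivAt (leafForce a lam)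
    (2 * (lam ^ 2 * leafX a lam w ^ 2 + leafY a lam w ^ 2)) w := by
  refine ((((hasDerivAt_leafX a lam w).pow 2).const_mul lam).sub
    ((hasDerivAt_leafY a lam w).pow 2)).congr_deriv ?_
  ring

variable {a lam}

theorem leafForce_zero (hlam : 0 ≤ lam) : leafForce a lam 0 = 0 := by
  simp [leafForce, leafX, leafY, mul_pow, Real.sq_sqrt hlam, mul_comm]

theorem deriv_leafForce_zero (hlam : 0 ≤ lam) :
    deriv (leafForce a lam) 0 = 2 * a ^ 2 * (lam * (lam + 1)) := by
  rw [(hasDerivAt_leafForce a lam 0).deriv]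
  simp only [leafX, leafY, mul_zero, neg_zero, Real.exp_zero, mul_one, mul_pow, Real.sq_sqrt hlam]
  ring

theorem two_pi_div_sqrt_deriv_leafForce (ha : 0 ≤ a) (hlam : 0 ≤ lam) :
    2 * Real.pi / √(deriv (leafForce a lam) 0) = Real.pi * √2 / (a * √(lam * (lam + 1))) := by
  have hsqrt : √(deriv (leafForce a lam) 0) = √2 * (a * √(lam * (lam + 1))) := by
    rw [deriv_leafForce_zero hlam, mul_assoc, Real.sqrt_mul zero_le_two,
      Real.sqrt_mul (sq_nonneg a), Real.sqrt_sq ha]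
  rw [hsqrt, mul_comm 2, ← div_div, mul_div_assoc, Real.div_sqrt]

theorem eventually_leaf_near_equilibrium (a lam : ℝ) {η : ℝ} (hη : 0 < η) :
    ∀ᶠ q : ℝ × ℝ in 𝓝 (0, 0),
      √((leafX a lam q.1 - a) ^ 2 + (leafY a lam q.1 - a * √lam) ^ 2 + q.2 ^ 2) < η := by
  have hcont : Continuous fun q : ℝ × ℝ ↦
      √((leafX a lam q.1 - a) ^ 2 + (leafY a lam q.1 - a * √lam) ^ 2 + q.2 ^ 2) := by
    unfold leafX leafY
    fun_prop
  exact (hcont.tendsto' (0, 0) 0 (by simp [leafX, leafY])).eventually_lt_const hη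

end Rattleback

theorem rattleback_periodic_orbits_general {lam M : ℝ} (hlam : 0 < lam) (hM : M ≠ 0) :
    ∀ η > (0 : ℝ), ∃ T > (0 : ℝ),
      |T - Real.pi * √2 / (|M| * √(lam * (lam + 1)))| < η ∧
      ∃ x y z : ℝ → ℝ,
        (∀ t, HasDerivAt x (lam * x t * z t) t) ∧
        (∀ t, HasDerivAt y (-(y t * z t)) t) ∧
        (∀ t, HasDerivAt z (y t ^ 2 - lam * x t ^ 2) t) ∧
        (∀ t, (x (t + T), y (t + T), z (t + T)) = (x t, y t, z t)) ∧
        (¬ ∀ t, (x t, y t, z t) = (x 0, y 0, z 0)) ∧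
        (∀ t, √((x t - |M|) ^ 2 + (y t - |M| * √lam) ^ 2 + z t ^ 2) < η) := by
  intro η hη
  have ha : 0 < |M| := abs_pos.2 hM
  set T₀ := Real.pi * √2 / (|M| * √(lam * (lam + 1)))
  have hforce : Continuous (leafForce |M| lam) := continuous_iff_continuousAt.2 fun w ↦
    (hasDerivAt_leafForce _ _ w).continuousAt
  have hpos : 0 < deriv (leafForce |M| lam) 0 := by
    rw [deriv_leafForce_zero hlam.le]
    positivity
  have hN : ball T₀ η ∩ Set.Ioi 0 ∈ 𝓝 (2 * Real.pi / √(deriv (leafForce |M| lam) 0)) := by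
    rw [two_pi_div_sqrt_deriv_leafForce ha.le hlam.le]
    exact inter_mem (ball_mem_nhds _ hη) (Ioi_mem_nhds (by positivity))
  obtain ⟨T, ⟨hT, hTpos⟩, w, z, hsol, hnear⟩ := exists_isPeriodicOscillation_near hforce
    (leafForce_zero hlam.le) hpos hN (eventually_leaf_near_equilibrium |M| lam hη)
  refine ⟨T, hTpos, hT, fun t ↦ leafX |M| lam (w t), fun t ↦ leafY |M| lam (w t), z,
    fun t ↦ ?_, fun t ↦ ?_, fun t ↦ ?_, fun t ↦ ?_, fun hconst ↦ ?_, hnear⟩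
  · exact (hasDerivAt_leafX _ _ _).comp t (hsol.hasDerivAt_position t)
  · exact ((hasDerivAt_leafY _ _ _).comp t (hsol.hasDerivAt_position t)).congr_deriv (neg_mul _ _)
  · simpa only [leafForce, neg_sub] using hsol.hasDerivAt_velocity t
  · simp only [hsol.periodic_position t, hsol.periodic_velocity t]
  · obtain ⟨t, s, hne⟩ := hsol.velocity_nonconstant
    have hz (t : ℝ) : z t = z 0 := congrArg (fun q ↦ q.2.2) (hconst t)
    exact hne ((hz t).trans (hz s).symm)

/-- Local existence of periodic orbits of the rattleback system near the stable
equilibrium `e₊ = (|M|, |M|√λ, 0)`: for every `η > 0` there are a period `T > 0` with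
`|T − π√2/(|M|√(λ(λ+1)))| < η` and a nonconstant `T`-periodic solution whose orbit
lies within distance `η` of `e₊`. -/
theorem rattleback_periodic_orbits (lam : ℕ) (hlam : 2 ≤ lam) (M : ℝ) (hM : M ≠ 0) :
    ∀ η > (0 : ℝ), ∃ T > (0 : ℝ),
      |T - Real.pi * Real.sqrt 2 / (|M| * Real.sqrt ((lam : ℝ) * ((lam : ℝ) + 1)))| < η ∧
      ∃ x y z : ℝ → ℝ,
        (∀ t : ℝ, HasDerivAt x ((lam : ℝ) * x t * z t) t) ∧
        (∀ t : ℝ, HasDerivAt y (-(y t * z t)) t) ∧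
        (∀ t : ℝ, HasDerivAt z ((y t) ^ 2 - (lam : ℝ) * (x t) ^ 2) t) ∧
        (∀ t : ℝ, (x (t + T), y (t + T), z (t + T)) = (x t, y t, z t)) ∧
        (¬ ∀ t : ℝ, (x t, y t, z t) = (x 0, y 0, z 0)) ∧
        (∀ t : ℝ, Real.sqrt ((x t - |M|) ^ 2 + (y t - |M| * Real.sqrt lam) ^ 2
          + (z t) ^ 2) < η) := by
  exact rattleback_periodic_orbits_general (by positivity) hM
end

section
/- Let λ ≥ 2 be a natural number. The range of the energy–Casimir map EC : ℝ³ → ℝ², EC(x,y,z) = (x·y^λ, (1/2)(x² + y² + z²)), equals the set {(h, c) ∈ ℝ² : c ≥ 0 and h² ≤ λ^λ · (2/(λ+1))^{λ+1} · c^{λ+1}}. -/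
/-!
Write `n` for the exponent `λ`. Choosing `z` freely, `(h, c)` lies in the range iff `h = x * y ^ n`
for some `x, y` with `x ^ 2 + y ^ 2 ≤ 2 * c`. With `s = 2 * c / (n + 1)`, the weighted inequality of
arithmetic and geometric means bounds `x ^ 2 * (y ^ 2) ^ n` on this disc by `n ^ n * s ^ (n + 1)`,
with equality at `x ^ 2 = s`, `y ^ 2 = n * s`. Every smaller value of `h ^ 2` is reached by keeping
`y ^ 2 = n * s` and decreasing `x ^ 2`.
-/

theorem mul_pow_le_pow_mul_pow_succ_of_add_le {R : Type*} [CommRing R] [LinearOrder R]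
    [IsStrictOrderedRing R] {n : ℕ} {a b s : R} (hb : 0 ≤ b) (hs : 0 ≤ s)
    (hab : a + b ≤ (n + 1) * s) : a * b ^ n ≤ n ^ n * s ^ (n + 1) := by
  rcases n.eq_zero_or_pos with rfl | hn
  · simp only [Nat.cast_zero, zero_add, one_mul] at hab
    simpa using (le_add_of_nonneg_right hb).trans hab
  have hn' : (0 : R) < n := Nat.cast_pos.2 hn
  -- `t ↦ t ^ (n + 1)` lies above its tangent line at `b`, evaluated here at `t = n * s`.
  have tangent : b ^ (n + 1) + (n + 1) * b ^ n * (n * s - b) ≤ (n * s) ^ (n + 1) := by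
    have := pow_add_mul_le_add_pow (b := n * s - b) hb
      (by linarith [mul_nonneg hn'.le hs]) (n + 1)
    simpa using this
  refine le_of_mul_le_mul_left ?_ hn'
  calc n * (a * b ^ n) ≤ n * (((n + 1) * s - b) * b ^ n) := by
        gcongr
        exact le_sub_iff_add_le.2 hab
    _ = b ^ (n + 1) + (n + 1) * b ^ n * (n * s - b) := by ring
    _ ≤ (n * s) ^ (n + 1) := tangent
    _ = n * (n ^ n * s ^ (n + 1)) := by ring

theorem exists_mul_pow_eq_and_sq_add_sq_le {n : ℕ} {h s : ℝ} (hs : 0 ≤ s)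
    (hh : h ^ 2 ≤ n ^ n * s ^ (n + 1)) :
    ∃ x y : ℝ, x * y ^ n = h ∧ x ^ 2 + y ^ 2 ≤ (n + 1) * s := by
  set y := √(n * s)
  have hy : y ^ 2 = n * s := Real.sq_sqrt (by positivity)
  have hle : h ^ 2 ≤ s * (y ^ n) ^ 2 := by
    calc h ^ 2 ≤ n ^ n * s ^ (n + 1) := hh
      _ = s * (n * s) ^ n := by ring
      _ = s * (y ^ n) ^ 2 := by rw [← hy, pow_right_comm]
  have hx : (h / y ^ n) ^ 2 ≤ s := by
    rw [div_pow]
    exact div_le_of_le_mul₀ (by positivity) hs hle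
  refine ⟨h / y ^ n, y, div_mul_cancel_of_imp fun hy0 ↦ ?_, by linarith⟩
  exact sq_nonpos_iff h |>.1 (by simpa [hy0] using hle)

theorem exists_mul_pow_eq_and_sq_add_sq_le_iff {n : ℕ} {h s : ℝ} :
    (∃ x y : ℝ, x * y ^ n = h ∧ x ^ 2 + y ^ 2 ≤ (n + 1) * s) ↔
      0 ≤ s ∧ h ^ 2 ≤ n ^ n * s ^ (n + 1) := by
  refine ⟨?_, fun ⟨hs, hh⟩ ↦ exists_mul_pow_eq_and_sq_add_sq_le hs hh⟩
  rintro ⟨x, y, rfl, hxy⟩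
  have hs : 0 ≤ s := nonneg_of_mul_nonneg_right (le_trans (by positivity) hxy) (by positivity)
  refine ⟨hs, ?_⟩
  calc (x * y ^ n) ^ 2 = x ^ 2 * (y ^ 2) ^ n := by ring
    _ ≤ n ^ n * s ^ (n + 1) := mul_pow_le_pow_mul_pow_succ_of_add_le (sq_nonneg y) hs hxy

theorem exists_half_mul_add_sq_eq_iff {r c : ℝ} :
    (∃ z : ℝ, 1 / 2 * (r + z ^ 2) = c) ↔ r ≤ 2 * c := by
  constructor
  · rintro ⟨z, rfl⟩
    linarith [sq_nonneg z]
  · intro hr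
    exact ⟨√(2 * c - r), by rw [Real.sq_sqrt (sub_nonneg.2 hr)]; ring⟩

theorem rattleback_energy_casimir_range_general (lam : ℕ) :
    (Set.range fun v : ℝ × ℝ × ℝ =>
        (v.1 * v.2.1 ^ lam, (1 / 2 : ℝ) * (v.1 ^ 2 + v.2.1 ^ 2 + v.2.2 ^ 2))) =
    {p : ℝ × ℝ | 0 ≤ p.2 ∧
      p.1 ^ 2 ≤ (lam : ℝ) ^ lam * (2 / ((lam : ℝ) + 1)) ^ (lam + 1) * p.2 ^ (lam + 1)} := by
  ext ⟨h, c⟩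
  have hpos : (0 : ℝ) < 2 / (lam + 1) := by positivity
  have hc : 2 * c = (lam + 1) * (2 / (lam + 1) * c) := by field_simp
  calc _ ↔ ∃ x y : ℝ, x * y ^ lam = h ∧ x ^ 2 + y ^ 2 ≤ 2 * c := by
        simp only [Set.mem_range, Prod.exists, Prod.mk.injEq, exists_and_left,
          exists_half_mul_add_sq_eq_iff]
    _ ↔ 0 ≤ 2 / (lam + 1) * c ∧ h ^ 2 ≤ lam ^ lam * (2 / (lam + 1) * c) ^ (lam + 1) := by
        rw [hc, exists_mul_pow_eq_and_sq_add_sq_le_iff]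
    _ ↔ _ := by
        rw [mul_nonneg_iff_of_pos_left hpos, mul_pow, ← mul_assoc, Set.mem_ofPred_eq]

/-- The range of the energy–Casimir map `EC(x,y,z) = (x·y^λ, (1/2)(x²+y²+z²))` of the
rattleback system (with `λ ≥ 2` a natural number) equals
`{(h, c) : c ≥ 0 and h² ≤ λ^λ · (2/(λ+1))^{λ+1} · c^{λ+1}}`. -/
theorem rattleback_energy_casimir_range (lam : ℕ) (hlam : 2 ≤ lam) :
    (Set.range fun v : ℝ × ℝ × ℝ =>
        (v.1 * v.2.1 ^ lam, (1 / 2 : ℝ) * (v.1 ^ 2 + v.2.1 ^ 2 + v.2.2 ^ 2))) =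
    {p : ℝ × ℝ | 0 ≤ p.2 ∧
      p.1 ^ 2 ≤ (lam : ℝ) ^ lam * (2 / ((lam : ℝ) + 1)) ^ (lam + 1) * p.2 ^ (lam + 1)} :=
  rattleback_energy_casimir_range_general lam
end

section
/- Let λ ≥ 2 be a natural number. The image under the energy–Casimir map EC(x,y,z) = (x·y^λ, (1/2)(x²+y²+z²)) of the set of nontrivial stable equilibria {(M, M√λ, 0) : M ≠ 0} ∪ {(M, −M√λ, 0) : M ≠ 0} equals the boundary curve {(h, c) ∈ ℝ² : c > 0 and h² = λ^λ · (2/(λ+1))^{λ+1} · c^{λ+1}}. -/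
/-!
An equilibrium satisfies `y² = λx²` and `z = 0`, so its energy and Casimir depend on `x²` alone up
to the sign of the energy: `H² = λ^λ (x²)^(λ+1)` and `C = (λ+1)/2 · x²`. Eliminating `x²` gives the
curve. Conversely, `c > 0` determines `x²`, the curve determines `H` up to sign, and `x ↦ -x`
preserves the equilibria and `C` while reversing the sign of `H`.
-/

theorem mul_pow_sq_of_sq_eq_mul_sq {R : Type*} [CommMonoid R] {a x y : R}
    (hxy : y ^ 2 = a * x ^ 2) (n : ℕ) :
    (x * y ^ n) ^ 2 = a ^ n * (x ^ 2) ^ (n + 1) :=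
  calc
    (x * y ^ n) ^ 2 = x ^ 2 * (y ^ 2) ^ n := by rw [mul_pow, pow_right_comm]
    _ = x ^ 2 * (a ^ n * (x ^ 2) ^ n) := by rw [hxy, mul_pow]
    _ = a ^ n * (x ^ 2) ^ (n + 1) := by rw [mul_left_comm, ← pow_succ']

namespace Rattleback

/-- The Hamiltonian `H(x, y, z) = x·y^λ` of the rattleback system. -/
def energy (lam : ℕ) (v : ℝ × ℝ × ℝ) : ℝ :=
  v.1 * v.2.1 ^ lam

/-- The Casimir function `C(x, y, z) = (x² + y² + z²)/2` of the rattleback system. -/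
noncomputable def casimir (v : ℝ × ℝ × ℝ) : ℝ :=
  (1 / 2 : ℝ) * (v.1 ^ 2 + v.2.1 ^ 2 + v.2.2 ^ 2)

/-- The energy–Casimir map `EC = (H, C)`. -/
noncomputable def energyCasimir (lam : ℕ) (v : ℝ × ℝ × ℝ) : ℝ × ℝ :=
  (energy lam v, casimir v)

/-- The nontrivial stable equilibria of the rattleback system, parametrized as two lines
without the origin. -/
def stableEquilibria (lam : ℕ) : Set (ℝ × ℝ × ℝ) :=
  {v | ∃ M : ℝ, M ≠ 0 ∧ v = (M, M * Real.sqrt lam, 0)} ∪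
    {v | ∃ M : ℝ, M ≠ 0 ∧ v = (M, -(M * Real.sqrt lam), 0)}

/-- The curve in the `(h, c)`-plane that bounds the image of the energy–Casimir map. -/
def boundaryCurve (lam : ℕ) : Set (ℝ × ℝ) :=
  {p | 0 < p.2 ∧
    p.1 ^ 2 = (lam : ℝ) ^ lam * (2 / ((lam : ℝ) + 1)) ^ (lam + 1) * p.2 ^ (lam + 1)}

variable {lam : ℕ} {x y z h c : ℝ}

theorem mem_stableEquilibria_iff :
    (x, y, z) ∈ stableEquilibria lam ↔ x ≠ 0 ∧ y ^ 2 = lam * x ^ 2 ∧ z = 0 := by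
  have sq_eq_iff : y ^ 2 = lam * x ^ 2 ↔ y = x * √lam ∨ y = -(x * √lam) := by
    rw [← sq_eq_sq_iff_eq_or_eq_neg, mul_pow, Real.sq_sqrt lam.cast_nonneg, mul_comm]
  simp only [stableEquilibria, Set.mem_union, Set.mem_ofPred_eq, Prod.mk.injEq, sq_eq_iff]
  grind

theorem mem_boundaryCurve_iff :
    (h, c) ∈ boundaryCurve lam ↔
      0 < c ∧ h ^ 2 = (lam : ℝ) ^ lam * (2 / ((lam : ℝ) + 1) * c) ^ (lam + 1) := by
  rw [mul_pow, ← mul_assoc]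
  rfl

theorem casimir_of_sq_eq (hxy : y ^ 2 = lam * x ^ 2) :
    casimir (x, y, 0) = ((lam : ℝ) + 1) / 2 * x ^ 2 := by
  simp only [casimir, hxy]
  ring

theorem energyCasimir_mem_boundaryCurve {v : ℝ × ℝ × ℝ} (hv : v ∈ stableEquilibria lam) :
    energyCasimir lam v ∈ boundaryCurve lam := by
  obtain ⟨x, y, z⟩ := v
  obtain ⟨hx, hxy, rfl⟩ := mem_stableEquilibria_iff.1 hv
  have hsq : 2 / ((lam : ℝ) + 1) * casimir (x, y, 0) = x ^ 2 := by
    rw [casimir_of_sq_eq hxy]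
    field_simp
  refine mem_boundaryCurve_iff.2 ⟨?_, ?_⟩
  · rw [casimir_of_sq_eq hxy]
    positivity
  · rw [hsq]
    exact mul_pow_sq_of_sq_eq_mul_sq hxy lam

theorem exists_stableEquilibrium_of_mem_boundaryCurve (hp : (h, c) ∈ boundaryCurve lam) :
    ∃ v ∈ stableEquilibria lam, energyCasimir lam v = (h, c) := by
  obtain ⟨hc, hcurve⟩ := mem_boundaryCurve_iff.1 hp
  set m := √(2 / ((lam : ℝ) + 1) * c)
  set y := m * √lam
  have hm : 0 < m := Real.sqrt_pos.2 (by positivity)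
  have hm_sq : m ^ 2 = 2 / ((lam : ℝ) + 1) * c := Real.sq_sqrt (by positivity)
  have hy_sq : y ^ 2 = lam * m ^ 2 := by
    rw [mul_pow, Real.sq_sqrt lam.cast_nonneg, mul_comm]
  have henergy_sq : h ^ 2 = (m * y ^ lam) ^ 2 := by
    rw [hcurve, ← hm_sq, mul_pow_sq_of_sq_eq_mul_sq hy_sq]
  obtain ⟨x, hx_sq, henergy⟩ : ∃ x, x ^ 2 = m ^ 2 ∧ x * y ^ lam = h := by
    rcases sq_eq_sq_iff_eq_or_eq_neg.1 henergy_sq with hpos | hneg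
    · exact ⟨m, rfl, hpos.symm⟩
    · exact ⟨-m, neg_sq m, by rw [hneg, neg_mul]⟩
  have hx : x ≠ 0 := sq_pos_iff.1 (hx_sq ▸ pow_pos hm 2)
  have hxy : y ^ 2 = lam * x ^ 2 := hx_sq ▸ hy_sq
  have hcasimir : casimir (x, y, 0) = c := by
    rw [casimir_of_sq_eq hxy, hx_sq, hm_sq]
    field_simp
  exact ⟨(x, y, 0), mem_stableEquilibria_iff.2 ⟨hx, hxy, rfl⟩, Prod.ext henergy hcasimir⟩

end Rattleback

open Rattleback in
theorem rattleback_image_stable_equilibria_general (lam : ℕ) :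
    energyCasimir lam '' stableEquilibria lam = boundaryCurve lam :=
  Set.Subset.antisymm
    (Set.image_subset_iff.2 fun _ hv => energyCasimir_mem_boundaryCurve hv)
    fun _ hp => exists_stableEquilibrium_of_mem_boundaryCurve hp

/-- The image under the energy–Casimir map `EC(x,y,z) = (x·y^λ, (1/2)(x²+y²+z²))` of the
set of nontrivial stable equilibria `{(M, ±M√λ, 0) : M ≠ 0}` of the rattleback system
equals the boundary curve `{(h, c) : c > 0, h² = λ^λ · (2/(λ+1))^{λ+1} · c^{λ+1}}`. -/
theorem rattleback_image_stable_equilibria (lam : ℕ) (hlam : 2 ≤ lam) :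
    (fun v : ℝ × ℝ × ℝ =>
        (v.1 * v.2.1 ^ lam, (1 / 2 : ℝ) * (v.1 ^ 2 + v.2.1 ^ 2 + v.2.2 ^ 2))) ''
      ({v : ℝ × ℝ × ℝ | ∃ M : ℝ, M ≠ 0 ∧ v = (M, M * Real.sqrt lam, 0)} ∪
       {v : ℝ × ℝ × ℝ | ∃ M : ℝ, M ≠ 0 ∧ v = (M, -(M * Real.sqrt lam), 0)}) =
    {p : ℝ × ℝ | 0 < p.2 ∧
      p.1 ^ 2 = (lam : ℝ) ^ lam * (2 / ((lam : ℝ) + 1)) ^ (lam + 1) * p.2 ^ (lam + 1)} :=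
  rattleback_image_stable_equilibria_general lam
end

section
/- Let λ ≥ 2 be a natural number and let (h, c) ∈ ℝ² satisfy c > 0, h ≠ 0 and h² < λ^λ · (2/(λ+1))^{λ+1} · c^{λ+1}. Then the fiber {(x, y, z) ∈ ℝ³ : x·y^λ = h and (1/2)(x² + y² + z²) = c} of the energy–Casimir map, with its subspace topology from ℝ³, is homeomorphic to the disjoint union of two copies of the unit circle. -/
/-!
The equation `x * y ^ lam = h ≠ 0` forces `y ≠ 0`, so the fiber splits into the parts `y > 0` and
`y < 0`, which the symmetry `(x, y, z) ↦ ((-1) ^ lam * x, -y, z)` exchanges. On `y > 0` put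
`y = exp t` and eliminate `x = h * exp (-lam * t)`: the Casimir becomes a convex function of
`(t, z)` with bounded sublevel sets, and the bound on `h ^ 2` says that its minimum is below `c`.
The level set is then the boundary of a bounded convex open set in the plane, as is the circle, and
any two such boundaries are homeomorphic by rescaling along rays.
-/

open Set Bornology

section ConvexLevelSets

variable {E : Type*} [AddCommGroup E] [Module ℝ E] [TopologicalSpace E] [IsTopologicalAddGroup E]
  [ContinuousSMul ℝ E] {f g : E → ℝ} {r s : ℝ}

theorem frontier_setOf_lt_eq_of_convexOn (hf : ConvexOn ℝ univ f) (hfc : Continuous f)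
    (hne : ∃ x, f x < r) : frontier {x | f x < r} = {x | f x = r} := by
  refine (frontier_lt_subset_eq hfc continuous_const).antisymm fun w (hw : f w = r) ↦ ?_
  obtain ⟨p, hp⟩ := hne
  have hsegment : openSegment ℝ p w ⊆ {x | f x < r} := by
    intro z hz
    by_contra! hrz
    have hlt := hf.lt_left_of_right_lt (mem_univ w) (mem_univ p) (openSegment_symm ℝ p w ▸ hz)
      (hp.trans_le (not_lt.1 hrz))
    exact hrz (hlt.trans_eq hw)
  rw [(isOpen_lt hfc continuous_const).frontier_eq]
  exact ⟨closure_mono hsegment (segment_subset_closure_openSegment (right_mem_segment ℝ p w)),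
    fun hlt : f w < r ↦ hlt.ne hw⟩

theorem nonempty_homeomorph_levelSet_of_convexOn [T1Space E]
    (hf : ConvexOn ℝ univ f) (hfc : Continuous f) (hfne : ∃ x, f x < r)
    (hfb : IsVonNBounded ℝ {x | f x < r})
    (hg : ConvexOn ℝ univ g) (hgc : Continuous g) (hgne : ∃ x, g x < s)
    (hgb : IsVonNBounded ℝ {x | g x < s}) :
    Nonempty ({x // f x = r} ≃ₜ {x // g x = s}) := by
  have hfo : IsOpen {x | f x < r} := isOpen_lt hfc continuous_const
  have hgo : IsOpen {x | g x < s} := isOpen_lt hgc continuous_const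
  obtain ⟨e, -, -, he⟩ := exists_homeomorph_image_eq
    (by simpa using hf.convex_lt r) (hfo.interior_eq.symm ▸ hfne) hfb
    (by simpa using hg.convex_lt s) (hgo.interior_eq.symm ▸ hgne) hgb
  rw [frontier_setOf_lt_eq_of_convexOn hf hfc hfne,
    frontier_setOf_lt_eq_of_convexOn hg hgc hgne] at he
  refine ⟨e.subtype fun x ↦ ?_⟩
  change _ ↔ e x ∈ {y | g y = s}
  rw [← he, e.injective.mem_set_image, mem_ofPred_eq]

end ConvexLevelSets

/-- The union of two separated subsets of a topological space is their topological disjoint sum. -/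
noncomputable def sumHomeomorphUnionOfSeparatedNhds {X : Type*} [TopologicalSpace X] {s t : Set X}
    (h : SeparatedNhds s t) : s ⊕ t ≃ₜ ↥(s ∪ t) :=
  (Topology.IsEmbedding.subtypeVal.sumElim_of_separatedNhds .subtypeVal
    (by simpa only [Subtype.range_coe] using h)).toHomeomorph.trans (.setCongr (by simp))

theorem convexOn_fst_sq_add_snd_sq : ConvexOn ℝ univ fun p : ℝ × ℝ ↦ p.1 ^ 2 + p.2 ^ 2 :=
  ((even_two.convexOn_pow (𝕜 := ℝ)).comp_linearMap (LinearMap.fst ℝ ℝ ℝ)).add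
    ((even_two.convexOn_pow (𝕜 := ℝ)).comp_linearMap (LinearMap.snd ℝ ℝ ℝ))

theorem isBounded_setOf_fst_sq_add_snd_sq_lt (r : ℝ) :
    IsBounded {p : ℝ × ℝ | p.1 ^ 2 + p.2 ^ 2 < r} := by
  refine (Metric.isBounded_Icc (-√r, -√r) (√r, √r)).subset fun p (hp : p.1 ^ 2 + p.2 ^ 2 < r) ↦ ?_
  have hfst := abs_le.1 (Real.abs_le_sqrt (show p.1 ^ 2 ≤ r by nlinarith))
  have hsnd := abs_le.1 (Real.abs_le_sqrt (show p.2 ^ 2 ≤ r by nlinarith))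
  exact ⟨⟨hfst.1, hsnd.1⟩, hfst.2, hsnd.2⟩

namespace Rattleback

/-- The fiber over `(h, c)` of the energy–Casimir map of the rattleback system. -/
def fiber (lam : ℕ) (h c : ℝ) : Set (ℝ × ℝ × ℝ) :=
  {v | v.1 * v.2.1 ^ lam = h ∧ (1 / 2 : ℝ) * (v.1 ^ 2 + v.2.1 ^ 2 + v.2.2 ^ 2) = c}

/-- The Casimir on the branch `0 < y` of the energy surface `x * y ^ lam = h`, as a function of
`(log y, z)`. -/
noncomputable def branchCasimir (lam : ℕ) (h : ℝ) (p : ℝ × ℝ) : ℝ :=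
  (1 / 2) * ((h * Real.exp (-lam * p.1)) ^ 2 + Real.exp p.1 ^ 2 + p.2 ^ 2)

variable {lam : ℕ} {h c : ℝ}

theorem continuous_branchCasimir : Continuous (branchCasimir lam h) := by
  unfold branchCasimir
  fun_prop

theorem convexOn_branchCasimir : ConvexOn ℝ univ (branchCasimir lam h) := by
  have hexp (a : ℝ) : ConvexOn ℝ univ fun p : ℝ × ℝ ↦ Real.exp (a * p.1) ^ 2 :=
    (convexOn_exp.comp_linearMap (a • LinearMap.fst ℝ ℝ ℝ)).pow (fun _ _ ↦ (Real.exp_pos _).le) 2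
  have hsnd : ConvexOn ℝ univ fun p : ℝ × ℝ ↦ p.2 ^ 2 :=
    (even_two.convexOn_pow (𝕜 := ℝ)).comp_linearMap (LinearMap.snd ℝ ℝ ℝ)
  have hsum : branchCasimir lam h = (1 / 2 : ℝ) • (h ^ 2 • (fun p ↦ Real.exp (-lam * p.1) ^ 2) +
      (fun p ↦ Real.exp (1 * p.1) ^ 2) + fun p ↦ p.2 ^ 2) := by
    ext p
    simp only [branchCasimir, Pi.add_apply, Pi.smul_apply, smul_eq_mul, mul_pow, one_mul]
  rw [hsum]
  exact ((((hexp (-lam)).smul (sq_nonneg h)).add (hexp 1)).add hsnd).smul one_half_pos.le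

theorem isBounded_setOf_branchCasimir_lt (hlam : lam ≠ 0) (hh : h ≠ 0) :
    IsBounded {p | branchCasimir lam h p < c} := by
  have hlam' : (0 : ℝ) < lam := by positivity
  refine (Metric.isBounded_Icc (-(√(2 * c) / |h| / lam), -√(2 * c)) (√(2 * c), √(2 * c))).subset ?_
  rintro ⟨t, z⟩ (hp : (1 / 2) * ((h * Real.exp (-lam * t)) ^ 2 + Real.exp t ^ 2 + z ^ 2) < c)
  have hx : |h| * Real.exp (-lam * t) ≤ √(2 * c) := by
    rw [← Real.abs_exp, ← abs_mul]
    exact Real.abs_le_sqrt (by nlinarith)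
  have hy : Real.exp t ≤ √(2 * c) := Real.le_sqrt_of_sq_le (by nlinarith)
  have hz : |z| ≤ √(2 * c) := Real.abs_le_sqrt (by nlinarith)
  have ht : -t * lam ≤ √(2 * c) / |h| := by
    have hexp : -t * lam ≤ Real.exp (-lam * t) := by linarith [Real.add_one_le_exp (-lam * t)]
    exact hexp.trans ((le_div_iff₀' (abs_pos.2 hh)).2 hx)
  exact ⟨⟨neg_le.1 ((le_div_iff₀ hlam').2 ht), (abs_le.1 hz).1⟩,
    by linarith [Real.add_one_le_exp t], (abs_le.1 hz).2⟩

theorem exists_branchCasimir_lt (hlam : lam ≠ 0) (hc : 0 < c)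
    (hlt : h ^ 2 < (lam : ℝ) ^ lam * (2 / ((lam : ℝ) + 1)) ^ (lam + 1) * c ^ (lam + 1)) :
    ∃ p, branchCasimir lam h p < c := by
  -- Over `0 < u`, the product `(2 * c - u) * u ^ lam` is largest here, where it is the bound on
  -- `h ^ 2`.
  set u : ℝ := 2 * c * lam / (lam + 1) with hu
  have hu_pos : 0 < u := by positivity
  have hmax : (lam : ℝ) ^ lam * (2 / ((lam : ℝ) + 1)) ^ (lam + 1) * c ^ (lam + 1) =
      (2 * c - u) * u ^ lam := by
    rw [hu]
    simp only [div_pow, mul_pow, pow_succ]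
    field_simp
    ring
  have hexp : Real.exp (Real.log √u) = √u := Real.exp_log (Real.sqrt_pos.2 hu_pos)
  have hexp_neg : Real.exp (-lam * Real.log √u) ^ 2 = (u ^ lam)⁻¹ := by
    rw [neg_mul, Real.exp_neg, Real.exp_nat_mul, hexp, inv_pow, pow_right_comm,
      Real.sq_sqrt hu_pos.le]
  have hx : h ^ 2 * (u ^ lam)⁻¹ < 2 * c - u := by
    rw [← div_eq_mul_inv, div_lt_iff₀ (pow_pos hu_pos lam), ← hmax]
    exact hlt
  refine ⟨(Real.log √u, 0), ?_⟩
  rw [branchCasimir, mul_pow, hexp_neg, hexp, Real.sq_sqrt hu_pos.le]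
  linarith

theorem nonempty_branchCasimir_levelSet_homeomorph_circle (hlam : lam ≠ 0) (hh : h ≠ 0)
    (hne : ∃ p, branchCasimir lam h p < c) :
    Nonempty ({p // branchCasimir lam h p = c} ≃ₜ {p : ℝ × ℝ // p.1 ^ 2 + p.2 ^ 2 = 1}) :=
  nonempty_homeomorph_levelSet_of_convexOn
    convexOn_branchCasimir continuous_branchCasimir hne
    (NormedSpace.isVonNBounded_of_isBounded ℝ (isBounded_setOf_branchCasimir_lt hlam hh))
    convexOn_fst_sq_add_snd_sq (by fun_prop) ⟨0, by simp⟩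
    (NormedSpace.isVonNBounded_of_isBounded ℝ (isBounded_setOf_fst_sq_add_snd_sq_lt 1))

theorem mul_exp_pow_eq_iff {x t : ℝ} :
    x * Real.exp t ^ lam = h ↔ x = h * Real.exp (-lam * t) := by
  rw [neg_mul, Real.exp_neg, ← Real.exp_nat_mul, eq_mul_inv_iff_mul_eq₀ (Real.exp_ne_zero _)]

theorem mk_exp_mem_fiber_iff {x t z : ℝ} :
    (x, Real.exp t, z) ∈ fiber lam h c ↔
      x = h * Real.exp (-lam * t) ∧ branchCasimir lam h (t, z) = c := by
  simp only [fiber, mem_ofPred_eq, mul_exp_pow_eq_iff]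
  exact and_congr_right fun hx ↦ by rw [hx, branchCasimir]

theorem eq_and_branchCasimir_eq_of_mem_fiber {v : ℝ × ℝ × ℝ} (hv : v ∈ fiber lam h c)
    (hy : 0 < v.2.1) :
    v.1 = h * Real.exp (-lam * Real.log v.2.1) ∧
      branchCasimir lam h (Real.log v.2.1, v.2.2) = c :=
  mk_exp_mem_fiber_iff.1 (by rwa [Real.exp_log hy])

/-- The part `0 < y` of the fiber in the coordinates `(log y, z)`. -/
noncomputable def fiberPosHomeomorph (lam : ℕ) (h c : ℝ) :
    ↥(fiber lam h c ∩ {v | 0 < v.2.1}) ≃ₜ {p // branchCasimir lam h p = c} where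
  toFun v := ⟨(Real.log v.1.2.1, v.1.2.2), (eq_and_branchCasimir_eq_of_mem_fiber v.2.1 v.2.2).2⟩
  invFun p := ⟨(h * Real.exp (-lam * p.1.1), Real.exp p.1.1, p.1.2),
    mk_exp_mem_fiber_iff.2 ⟨rfl, p.2⟩, Real.exp_pos _⟩
  left_inv v := Subtype.ext <| Prod.ext (eq_and_branchCasimir_eq_of_mem_fiber v.2.1 v.2.2).1.symm <|
    Prod.ext (Real.exp_log v.2.2) rfl
  right_inv p := Subtype.ext <| Prod.ext (Real.log_exp p.1.1) rfl
  continuous_toFun := by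
    have hlog : Continuous fun v : ↥(fiber lam h c ∩ {v | 0 < v.2.1}) ↦ Real.log v.1.2.1 :=
      Continuous.log (by fun_prop) fun v ↦ v.2.2.ne'
    fun_prop
  continuous_invFun := by fun_prop

/-- The symmetry `(x, y, z) ↦ ((-1) ^ lam * x, -y, z)` of the energy–Casimir map. -/
noncomputable def reflection (lam : ℕ) : ℝ × ℝ × ℝ ≃ₜ ℝ × ℝ × ℝ :=
  (Homeomorph.mulLeft₀ ((-1) ^ lam) (by simp)).prodCongr
    ((Homeomorph.neg ℝ).prodCongr (.refl ℝ))

theorem reflection_apply (v : ℝ × ℝ × ℝ) :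
    reflection lam v = ((-1) ^ lam * v.1, -v.2.1, v.2.2) :=
  rfl

theorem reflection_mem_fiber_iff {v : ℝ × ℝ × ℝ} :
    reflection lam v ∈ fiber lam h c ↔ v ∈ fiber lam h c := by
  have hsign : (-1 : ℝ) ^ lam * (-1) ^ lam = 1 := by simp [← mul_pow]
  have hH : (-1) ^ lam * v.1 * (-v.2.1) ^ lam = v.1 * v.2.1 ^ lam := by
    rw [neg_pow v.2.1]
    linear_combination v.1 * v.2.1 ^ lam * hsign
  have hx : ((-1) ^ lam * v.1) ^ 2 = v.1 ^ 2 := by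
    linear_combination v.1 ^ 2 * hsign
  simp only [fiber, mem_ofPred_eq, reflection_apply, hH, hx, neg_sq]

theorem fiber_eq_pos_union_neg (hlam : lam ≠ 0) (hh : h ≠ 0) :
    fiber lam h c = fiber lam h c ∩ {v | 0 < v.2.1} ∪ fiber lam h c ∩ {v | v.2.1 < 0} := by
  rw [← inter_union_distrib_left, left_eq_inter]
  rintro ⟨x, y, z⟩ ⟨hH, -⟩
  have hy : y ≠ 0 := by
    rintro rfl
    exact hh (by simpa [hlam] using hH.symm)
  exact hy.symm.lt_or_gt

theorem separatedNhds_fiber_pos_neg :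
    SeparatedNhds (fiber lam h c ∩ {v | 0 < v.2.1}) (fiber lam h c ∩ {v | v.2.1 < 0}) :=
  ⟨{v | 0 < v.2.1}, {v | v.2.1 < 0}, isOpen_lt (by fun_prop) (by fun_prop),
    isOpen_lt (by fun_prop) (by fun_prop), inter_subset_right, inter_subset_right,
    disjoint_left.2 fun v (hpos : 0 < v.2.1) (hneg : v.2.1 < 0) ↦ lt_asymm hpos hneg⟩

/-- The part `y < 0` of the fiber, reflected onto the part `0 < y`. -/
noncomputable def fiberNegHomeomorphPos (lam : ℕ) (h c : ℝ) :
    ↥(fiber lam h c ∩ {v | v.2.1 < 0}) ≃ₜ ↥(fiber lam h c ∩ {v | 0 < v.2.1}) :=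
  (reflection lam).subtype fun v ↦
    and_congr reflection_mem_fiber_iff.symm (neg_pos (a := v.2.1)).symm

end Rattleback

open Rattleback in
theorem rattleback_fiber_two_circles_general (lam : ℕ) (hlam : lam ≠ 0) (h c : ℝ)
    (hc : 0 < c) (hh : h ≠ 0)
    (hlt : h ^ 2 < (lam : ℝ) ^ lam * (2 / ((lam : ℝ) + 1)) ^ (lam + 1) * c ^ (lam + 1)) :
    Nonempty
      (({v : ℝ × ℝ × ℝ // v.1 * v.2.1 ^ lam = h ∧
          (1 / 2 : ℝ) * (v.1 ^ 2 + v.2.1 ^ 2 + v.2.2 ^ 2) = c}) ≃ₜ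
        ({p : ℝ × ℝ // p.1 ^ 2 + p.2 ^ 2 = 1} ⊕ {p : ℝ × ℝ // p.1 ^ 2 + p.2 ^ 2 = 1})) := by
  obtain ⟨levelSetHomeo⟩ := nonempty_branchCasimir_levelSet_homeomorph_circle hlam hh
    (exists_branchCasimir_lt hlam hc hlt)
  let split : fiber lam h c ≃ₜ
      ↥(fiber lam h c ∩ {v | 0 < v.2.1}) ⊕ ↥(fiber lam h c ∩ {v | v.2.1 < 0}) :=
    (Homeomorph.setCongr (fiber_eq_pos_union_neg hlam hh)).trans
      (sumHomeomorphUnionOfSeparatedNhds separatedNhds_fiber_pos_neg).symm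
  let posHomeo := (fiberPosHomeomorph lam h c).trans levelSetHomeo
  exact ⟨split.trans (posHomeo.sumCongr ((fiberNegHomeomorphPos lam h c).trans posHomeo))⟩

/-- For a regular value `(h, c)` with `c > 0`, `h ≠ 0` and
`h² < λ^λ (2/(λ+1))^{λ+1} c^{λ+1}`, the fiber of the energy–Casimir map of the
rattleback system over `(h, c)` is homeomorphic to the disjoint union of two circles. -/
theorem rattleback_fiber_two_circles (lam : ℕ) (hlam : 2 ≤ lam) (h c : ℝ)
    (hc : 0 < c) (hh : h ≠ 0)
    (hlt : h ^ 2 < (lam : ℝ) ^ lam * (2 / ((lam : ℝ) + 1)) ^ (lam + 1) * c ^ (lam + 1)) :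
    Nonempty
      (({v : ℝ × ℝ × ℝ // v.1 * v.2.1 ^ lam = h ∧
          (1 / 2 : ℝ) * (v.1 ^ 2 + v.2.1 ^ 2 + v.2.2 ^ 2) = c}) ≃ₜ
        ({p : ℝ × ℝ // p.1 ^ 2 + p.2 ^ 2 = 1} ⊕ {p : ℝ × ℝ // p.1 ^ 2 + p.2 ^ 2 = 1})) :=
  rattleback_fiber_two_circles_general lam (by lia) h c hc hh hlt
end

section
/- Let λ ≥ 2 be a natural number and let (x(t), y(t), z(t)) be a solution of the rattleback system. Define the 3×3 real matrices L(t) and B(t) by: L is skew-symmetric with L₁₂ = −x + y√λ, L₁₃ = x√λ + y, L₂₃ = z√(λ+1) (and L₂₁ = −L₁₂, L₃₁ = −L₁₃, L₃₂ = −L₂₃, zero diagonal), where x = x(t), y = y(t), z = z(t); and B is skew-symmetric with B₁₂ = (−x√λ + y)·√(λ+1), B₁₃ = 0, B₂₃ = z√λ (and B₂₁ = −B₁₂, B₃₁ = 0, B₃₂ = −B₂₃, zero diagonal). Then t ↦ L(t) is differentiable and satisfies the Lax equation L'(t) = L(t)·B(t) − B(t)·L(t) for all t ∈ ℝ. -/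
/-!
The matrix `L` depends linearly on `(x, y, z)`, so `L'` is `L` evaluated at the velocity
`(ẋ, ẏ, ż)`, and the Lax equation becomes an algebraic identity: the commutator of `L` and `B`
at a point equals `L` evaluated at the rattleback vector field. Both matrices are skew-symmetric,
so the commutator reduces to a cross product of their upper triangles, and the identity follows
from `(√λ)² = λ` and `(√(λ + 1))² = λ + 1`.
-/

section Algebra

variable {R : Type*} [CommRing R]

/-- The skew-symmetric `3 × 3` matrix with upper triangle `(a, b, c)`, read row by row: coordinates
on `𝔰𝔬(3)` in which the commutator is, up to signs, the cross product. -/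
def skewMatrix (a b c : R) : Matrix (Fin 3) (Fin 3) R :=
  !![0, a, b; -a, 0, c; -b, -c, 0]

theorem skewMatrix_lie_skewMatrix (a b c a' b' c' : R) :
    ⁅skewMatrix a b c, skewMatrix a' b' c'⁆ =
      skewMatrix (c * b' - b * c') (a * c' - c * a') (b * a' - a * b') := by
  ext i j
  fin_cases i <;> fin_cases j <;> simp [skewMatrix, Ring.lie_def] <;> ring

/-- The matrix `L` of the rattleback Lax pair at the point `(x, y, z)`, where `s` and `r` stand
for `√λ` and `√(λ + 1)`. -/
def rattlebackL (s r x y z : R) : Matrix (Fin 3) (Fin 3) R :=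
  skewMatrix (-x + y * s) (x * s + y) (z * r)

/-- The matrix `B` of the rattleback Lax pair at the point `(x, y, z)`, where `s` and `r` stand
for `√λ` and `√(λ + 1)`. -/
def rattlebackB (s r x y z : R) : Matrix (Fin 3) (Fin 3) R :=
  skewMatrix ((-(x * s) + y) * r) 0 (z * s)

theorem rattlebackL_eq (s r x y z : R) :
    rattlebackL s r x y z =
      !![0, -x + y * s, x * s + y; x - y * s, 0, z * r; -(x * s) - y, -(z * r), 0] := by
  have h₂₁ : -(-x + y * s) = x - y * s := by ring
  rw [rattlebackL, skewMatrix, h₂₁, neg_add']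

theorem rattlebackB_eq (s r x y z : R) :
    rattlebackB s r x y z =
      !![0, (-(x * s) + y) * r, 0; (x * s - y) * r, 0, z * s; 0, -(z * s), 0] := by
  have h₂₁ : -((-(x * s) + y) * r) = (x * s - y) * r := by ring
  rw [rattlebackB, skewMatrix, h₂₁, neg_zero]

theorem rattlebackL_lie_rattlebackB {lam s r : R} (hs : s ^ 2 = lam) (hr : r ^ 2 = lam + 1)
    (x y z : R) :
    ⁅rattlebackL s r x y z, rattlebackB s r x y z⁆ =
      rattlebackL s r (lam * x * z) (-(y * z)) (y ^ 2 - lam * x ^ 2) := by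
  rw [rattlebackL, rattlebackB, skewMatrix_lie_skewMatrix, rattlebackL]
  congr 1
  · linear_combination -(x * z) * hs
  · linear_combination y * z * hs + (x * s - y) * z * hr
  · linear_combination -(x ^ 2 * r) * hs

end Algebra

section Calculus

variable {𝕜 A : Type*} [NontriviallyNormedField 𝕜] [NormedCommRing A] [NormedAlgebra 𝕜 A] {t : 𝕜}

theorem hasDerivAt_skewMatrix {a b c : 𝕜 → A} {a' b' c' : A} (ha : HasDerivAt a a' t)
    (hb : HasDerivAt b b' t) (hc : HasDerivAt c c' t) (i j : Fin 3) :
    HasDerivAt (fun τ ↦ skewMatrix (a τ) (b τ) (c τ) i j) (skewMatrix a' b' c' i j) t := by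
  have h0 : HasDerivAt (fun _ ↦ (0 : A)) 0 t := hasDerivAt_const t 0
  fin_cases i <;> fin_cases j
  exacts [h0, ha, hb, ha.neg, h0, hc, hb.neg, hc.neg, h0]

theorem hasDerivAt_rattlebackL (s r : A) {x y z : 𝕜 → A} {x' y' z' : A}
    (hx : HasDerivAt x x' t) (hy : HasDerivAt y y' t) (hz : HasDerivAt z z' t) (i j : Fin 3) :
    HasDerivAt (fun τ ↦ rattlebackL s r (x τ) (y τ) (z τ) i j) (rattlebackL s r x' y' z' i j) t :=
  hasDerivAt_skewMatrix (hx.neg.add (hy.mul_const s)) ((hx.mul_const s).add hy)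
    (hz.mul_const r) i j

theorem rattleback_lax_formulation_general {lam s r : A} (hs : s ^ 2 = lam)
    (hr : r ^ 2 = lam + 1) {x y z : 𝕜 → A} (hx : HasDerivAt x (lam * x t * z t) t)
    (hy : HasDerivAt y (-(y t * z t)) t) (hz : HasDerivAt z (y t ^ 2 - lam * x t ^ 2) t)
    (i j : Fin 3) :
    HasDerivAt (fun τ ↦ rattlebackL s r (x τ) (y τ) (z τ) i j)
      (⁅rattlebackL s r (x t) (y t) (z t), rattlebackB s r (x t) (y t) (z t)⁆ i j) t := by
  rw [rattlebackL_lie_rattlebackB hs hr]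
  exact hasDerivAt_rattlebackL s r hx hy hz i j

end Calculus

/-- Lax formulation of the rattleback system: along any solution of
`ẋ = λxz, ẏ = −yz, ż = y² − λx²`, the matrix `L(t)` satisfies (entrywise)
the Lax equation `L' = L·B − B·L`. -/
theorem rattleback_lax_formulation (lam : ℕ) (hlam : 2 ≤ lam)
    (x y z : ℝ → ℝ)
    (hx : ∀ t : ℝ, HasDerivAt x ((lam : ℝ) * x t * z t) t)
    (hy : ∀ t : ℝ, HasDerivAt y (-(y t * z t)) t)
    (hz : ∀ t : ℝ, HasDerivAt z ((y t) ^ 2 - (lam : ℝ) * (x t) ^ 2) t)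
    (L B : ℝ → Matrix (Fin 3) (Fin 3) ℝ)
    (hL : ∀ t : ℝ, L t =
      !![0, -(x t) + y t * Real.sqrt lam, x t * Real.sqrt lam + y t;
         x t - y t * Real.sqrt lam, 0, z t * Real.sqrt ((lam : ℝ) + 1);
         -(x t * Real.sqrt lam) - y t, -(z t * Real.sqrt ((lam : ℝ) + 1)), 0])
    (hB : ∀ t : ℝ, B t =
      !![0, (-(x t * Real.sqrt lam) + y t) * Real.sqrt ((lam : ℝ) + 1), 0;
         (x t * Real.sqrt lam - y t) * Real.sqrt ((lam : ℝ) + 1), 0, z t * Real.sqrt lam;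
         0, -(z t * Real.sqrt lam), 0]) :
    ∀ t : ℝ, ∀ i j : Fin 3,
      HasDerivAt (fun s : ℝ => L s i j) ((L t * B t - B t * L t) i j) t := by
  intro t i j
  simp only [hL, hB, ← rattlebackL_eq, ← rattlebackB_eq]
  exact rattleback_lax_formulation_general (Real.sq_sqrt (by positivity))
    (Real.sq_sqrt (by positivity)) (hx t) (hy t) (hz t) i j
end

section
/- Let λ ≥ 2 be a natural number, ε > 0 and h ∈ ℝ. For every solution (x(t), y(t), z(t)) of the perturbed rattleback system ẋ = λxz + ε(xy^λ − h)·y^{λ−1}·y(λx² − y² − z²), ẏ = −yz + ε(xy^λ − h)·y^{λ−1}·x(−λx² + y² − λz²), ż = y² − λx² + ε(xy^λ − h)·y^{λ−1}·(λ+1)xyz, the Casimir function C(t) := (1/2)(x(t)² + y(t)² + z(t)²) is constant in t, i.e. C remains a first integral of the perturbed system. -/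
/-! Both vector fields are cross products with the position `r = (x, y, z)`: the rattleback field
is `R = (y, λx, 0) × r`, and the vector multiplying the scalar `ε(xy^λ − h)y^{λ−1}` is `R × r`.
Hence every solution satisfies `ṙ = a × r` for some time-dependent `a`, so `ṙ` is orthogonal
to `r` and `r ⬝ r = 2C` is conserved. -/

open Matrix

theorem dotProduct_self_const_of_hasDerivAt {𝕜 : Type*} [RCLike 𝕜] {ι : Type*} [Fintype ι]
    {r r' : 𝕜 → ι → 𝕜} (hr : ∀ t, HasDerivAt r (r' t) t)
    (horth : ∀ t, r t ⬝ᵥ r' t = 0) (s t : 𝕜) :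
    r s ⬝ᵥ r s = r t ⬝ᵥ r t := by
  have hdot (τ : 𝕜) : HasDerivAt (fun τ => r τ ⬝ᵥ r τ) 0 τ := by
    have hcoord (i : ι) : HasDerivAt (fun τ => r τ i) (r' τ i) τ := hasDerivAt_pi.1 (hr τ) i
    refine (HasDerivAt.fun_sum fun i _ => (hcoord i).mul (hcoord i)).congr_deriv ?_
    calc ∑ i, (r' τ i * r τ i + r τ i * r' τ i)
        = r' τ ⬝ᵥ r τ + r τ ⬝ᵥ r' τ := Finset.sum_add_distrib
      _ = 0 := by rw [dotProduct_comm, horth τ, add_zero]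
  exact is_const_of_deriv_eq_zero (fun τ => (hdot τ).differentiableAt) (fun τ => (hdot τ).deriv) s t

theorem dotProduct_self_const_of_hasDerivAt_cross {𝕜 : Type*} [RCLike 𝕜]
    {a r : 𝕜 → Fin 3 → 𝕜} (hr : ∀ t, HasDerivAt r (a t ⨯₃ r t) t) (s t : 𝕜) :
    r s ⬝ᵥ r s = r t ⬝ᵥ r t :=
  dotProduct_self_const_of_hasDerivAt hr (fun τ => dot_cross_self (a τ) (r τ)) s t

section VectorFields

variable {K : Type*} [CommRing K]

/-- The unperturbed rattleback vector field at the point `(x, y, z)`, encoded as the vector `r`. -/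
def rattlebackField (lam : K) (r : Fin 3 → K) : Fin 3 → K :=
  ![lam * r 0 * r 2, -(r 1 * r 2), r 1 ^ 2 - lam * r 0 ^ 2]

/-- The direction of the perturbation of the rattleback system: the scalar factor
`ε(xy^λ − h)y^{λ−1}` is left out, since conservation of the Casimir rests on the direction alone. -/
def rattlebackPerturbation (lam : K) (r : Fin 3 → K) : Fin 3 → K :=
  ![r 1 * (lam * r 0 ^ 2 - r 1 ^ 2 - r 2 ^ 2),
    r 0 * (-lam * r 0 ^ 2 + r 1 ^ 2 - lam * r 2 ^ 2),
    (lam + 1) * r 0 * r 1 * r 2]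

-- Up to the factor `y^{λ−1}`, `(y, λx, 0)` is the gradient of the first integral `xy^λ`.
theorem rattlebackField_eq_cross (lam : K) (r : Fin 3 → K) :
    rattlebackField lam r = ![r 1, lam * r 0, 0] ⨯₃ r := by
  simp only [rattlebackField, cross_apply, cons_val]
  congrm ![?_, ?_, ?_] <;> ring

theorem rattlebackPerturbation_eq_cross (lam : K) (r : Fin 3 → K) :
    rattlebackPerturbation lam r = rattlebackField lam r ⨯₃ r := by
  simp only [rattlebackField, rattlebackPerturbation, cross_apply, cons_val]
  congrm ![?_, ?_, ?_] <;> ring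

theorem rattlebackField_add_smul_perturbation_eq_cross (lam c : K) (r : Fin 3 → K) :
    rattlebackField lam r + c • rattlebackPerturbation lam r =
      (![r 1, lam * r 0, 0] + c • rattlebackField lam r) ⨯₃ r := by
  rw [map_add, map_smul, LinearMap.add_apply, LinearMap.smul_apply,
    ← rattlebackField_eq_cross, ← rattlebackPerturbation_eq_cross]

end VectorFields

theorem rattleback_perturbed_casimir_constant_general {𝕜 : Type*} [RCLike 𝕜]
    (lam : 𝕜) (g x y z : 𝕜 → 𝕜)
    (hx : ∀ t, HasDerivAt x (lam * x t * z t +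
      g t * (y t * (lam * x t ^ 2 - y t ^ 2 - z t ^ 2))) t)
    (hy : ∀ t, HasDerivAt y (-(y t * z t) +
      g t * (x t * (-lam * x t ^ 2 + y t ^ 2 - lam * z t ^ 2))) t)
    (hz : ∀ t, HasDerivAt z (y t ^ 2 - lam * x t ^ 2 +
      g t * ((lam + 1) * x t * y t * z t)) t) (s t : 𝕜) :
    (1 / 2 : 𝕜) * (x s ^ 2 + y s ^ 2 + z s ^ 2) = (1 / 2 : 𝕜) * (x t ^ 2 + y t ^ 2 + z t ^ 2) := by
  let r : 𝕜 → Fin 3 → 𝕜 := fun τ => ![x τ, y τ, z τ]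
  have hr (τ : 𝕜) : HasDerivAt r
      (rattlebackField lam (r τ) + g τ • rattlebackPerturbation lam (r τ)) τ := by
    refine hasDerivAt_pi.2 fun i => ?_
    fin_cases i
    exacts [hx τ, hy τ, hz τ]
  have hconst : r s ⬝ᵥ r s = r t ⬝ᵥ r t :=
    dotProduct_self_const_of_hasDerivAt_cross
      (fun τ => rattlebackField_add_smul_perturbation_eq_cross lam (g τ) (r τ) ▸ hr τ) s t
  have hsq (τ : 𝕜) : r τ ⬝ᵥ r τ = x τ ^ 2 + y τ ^ 2 + z τ ^ 2 := by
    simp only [r, vec3_dotProduct', sq]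
  rw [← hsq, ← hsq, hconst]

/-- The Casimir `C = (1/2)(x² + y² + z²)` remains a first integral of the perturbed
rattleback system
`ẋ = λxz + ε(xy^λ − h)y^{λ−1}·y(λx² − y² − z²)`,
`ẏ = −yz + ε(xy^λ − h)y^{λ−1}·x(−λx² + y² − λz²)`,
`ż = y² − λx² + ε(xy^λ − h)y^{λ−1}·(λ+1)xyz`. -/
theorem rattleback_perturbed_casimir_constant (lam : ℕ) (hlam : 2 ≤ lam)
    (ε : ℝ) (hε : 0 < ε) (h : ℝ)
    (x y z : ℝ → ℝ)
    (hx : ∀ t : ℝ, HasDerivAt x ((lam : ℝ) * x t * z t +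
      ε * (x t * (y t) ^ lam - h) * (y t) ^ (lam - 1) *
        (y t * ((lam : ℝ) * (x t) ^ 2 - (y t) ^ 2 - (z t) ^ 2))) t)
    (hy : ∀ t : ℝ, HasDerivAt y (-(y t * z t) +
      ε * (x t * (y t) ^ lam - h) * (y t) ^ (lam - 1) *
        (x t * (-(lam : ℝ) * (x t) ^ 2 + (y t) ^ 2 - (lam : ℝ) * (z t) ^ 2))) t)
    (hz : ∀ t : ℝ, HasDerivAt z ((y t) ^ 2 - (lam : ℝ) * (x t) ^ 2 +
      ε * (x t * (y t) ^ lam - h) * (y t) ^ (lam - 1) *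
        (((lam : ℝ) + 1) * x t * y t * z t)) t) :
    ∀ t : ℝ, (1 / 2 : ℝ) * ((x t) ^ 2 + (y t) ^ 2 + (z t) ^ 2)
      = (1 / 2 : ℝ) * ((x 0) ^ 2 + (y 0) ^ 2 + (z 0) ^ 2) := by
  intro t
  exact rattleback_perturbed_casimir_constant_general (lam : ℝ)
    (fun τ => ε * (x τ * y τ ^ lam - h) * y τ ^ (lam - 1)) x y z hx hy hz t 0
end

section
/- Let λ ≥ 2 be an even natural number, M ∈ ℝ with M ≠ 0, ε > 0, and set h = |M|^{λ+1}·(√λ)^λ and e₊ = (|M|, |M|√λ, 0). Consider the perturbed rattleback system p₋: ẋ = λxz + ε(xy^λ − h)·y^{λ−1}·y(λx² − y² − z²), ẏ = −yz + ε(xy^λ − h)·y^{λ−1}·x(−λx² + y² − λz²), ż = y² − λx² + ε(xy^λ − h)·y^{λ−1}·(λ+1)xyz. Then e₊ is an equilibrium of p₋ which is asymptotically stable with respect to perturbations along the invariant sphere S = {(x,y,z) ∈ ℝ³ : x² + y² + z² = (λ+1)M²}; that is: (i) for every ε' > 0 there exists δ > 0 such that every solution of p₋ with initial condition in S at distance <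 δ from e₊ stays at distance < ε' from e₊ for all t ≥ 0, and (ii) there exists δ₀ > 0 such that every solution of p₋ with initial condition in S at distance < δ₀ from e₊ converges to e₊ as t → +∞. -/
/-!
Put `H = xy^λ` and let `X = (λxz, −yz, y² − λx²)` be the unperturbed field. Then
`∇H = y^{λ−1}(y, λx, 0)` and `X = (y, λx, 0) × p`, while the perturbation is
`ε(H − h)y^{λ−1}` times `X × p`. Hence both parts are tangent to the spheres centred at the
origin, and along the perturbed flow `Ḣ = ε(h − H)(y^{λ−1})²‖X‖²`. By AM–GM, `e₊` is the strict
maximum of `H` on the part of its sphere where `x, y > 0`, with value `h`, and it is the only zero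
of `X` there. So `−H` is a strict Lyapunov function for `e₊` along the sphere.
-/

open Filter

open Set Metric
open scoped Topology

section Lyapunov

variable {E : Type*} [NormedAddCommGroup E] [NormedSpace ℝ E]

/-- The orbital (Lie) derivative `V̇ = ∇V · v` of a function `V` along a vector field `v`. -/
noncomputable def orbitalDeriv (v : E → E) (V : E → ℝ) (p : E) : ℝ :=
  fderiv ℝ V p (v p)

/-- Positive invariance of `S` under `ẋ = v x`. It is phrased with integral curves, since `v` need
not generate a flow. -/
def ForwardInvariant (v : E → E) (S : Set E) : Prop :=
  ∀ γ : ℝ → E, IsIntegralCurveOn γ (fun _ ↦ v) (Ici 0) → γ 0 ∈ S → ∀ t ≥ 0, γ t ∈ S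

/-- Lyapunov stability of `e` for `ẋ = v x` with respect to perturbations along `S`: forward
integral curves that start in `S` close to `e` stay close to `e`. -/
def LyapunovStableOn (v : E → E) (S : Set E) (e : E) : Prop :=
  ∀ U ∈ 𝓝 e, ∀ᶠ p in 𝓝[S] e, ∀ γ : ℝ → E,
    IsIntegralCurveOn γ (fun _ ↦ v) (Ici 0) → γ 0 = p → ∀ t ≥ 0, γ t ∈ U

/-- Local attractivity of `e` for `ẋ = v x` with respect to perturbations along `S`: forward
integral curves that start in `S` close to `e` converge to `e`. -/
def LocallyAttractiveOn (v : E → E) (S : Set E) (e : E) : Prop :=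
  ∀ᶠ p in 𝓝[S] e, ∀ γ : ℝ → E,
    IsIntegralCurveOn γ (fun _ ↦ v) (Ici 0) → γ 0 = p → Tendsto γ atTop (𝓝 e)

variable {v : E → E} {V : E → ℝ} {S : Set E} {e : E}

theorem orbitalDeriv_neg (p : E) : orbitalDeriv v (-V) p = -orbitalDeriv v V p := by
  simp [orbitalDeriv, fderiv_neg]

theorem orbitalDeriv_of_eq_zero {p : E} (hp : v p = 0) : orbitalDeriv v V p = 0 := by
  simp [orbitalDeriv, hp]

theorem eventually_orbitalDeriv_nonpos (he : v e = 0)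
    (hneg : ∀ᶠ p in 𝓝[S \ {e}] e, orbitalDeriv v V p < 0) :
    ∀ᶠ p in 𝓝[S] e, orbitalDeriv v V p ≤ 0 := by
  rw [eventually_nhdsWithin_iff] at hneg ⊢
  filter_upwards [hneg] with p hp hpS
  rcases eq_or_ne p e with rfl | hne
  · exact (orbitalDeriv_of_eq_zero he).le
  · exact (hp ⟨hpS, hne⟩).le

theorem continuous_orbitalDeriv (hv : Continuous v) (hV : ContDiff ℝ 1 V) :
    Continuous (orbitalDeriv v V) :=
  (hV.continuous_fderiv one_ne_zero).clm_apply hv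

theorem isIntegralCurveOn_comp_add_Ici {γ : ℝ → E} (hγ : IsIntegralCurveOn γ (fun _ ↦ v) (Ici 0))
    {t₀ : ℝ} (ht₀ : 0 ≤ t₀) :
    IsIntegralCurveOn (fun t ↦ γ (t + t₀)) (fun _ ↦ v) (Ici 0) :=
  (hγ.comp_add t₀).mono fun t (ht : 0 ≤ t) ↦ by
    simpa [mem_vadd_set_iff_neg_vadd_mem, add_comm] using add_nonneg ht ht₀

theorem sub_le_mul_of_orbitalDeriv_le {γ : ℝ → E} {a b c : ℝ} (hV : Differentiable ℝ V)
    (hγ : IsIntegralCurveOn γ (fun _ ↦ v) (Icc a b)) (hab : a ≤ b)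
    (hc : ∀ t ∈ Icc a b, orbitalDeriv v V (γ t) ≤ c) :
    V (γ b) - V (γ a) ≤ c * (b - a) := by
  have hderiv : ∀ t ∈ interior (Icc a b),
      HasDerivAt (V ∘ γ) (orbitalDeriv v V (γ t)) t := fun t ht ↦
    (hV _).hasFDerivAt.comp_hasDerivAt t
      ((hγ t (interior_subset ht)).hasDerivAt (mem_interior_iff_mem_nhds.1 ht))
  exact (convex_Icc a b).image_sub_le_mul_sub_of_deriv_le
    (hV.continuous.comp_continuousOn hγ.continuousOn)
    (fun t ht ↦ (hderiv t ht).differentiableAt.differentiableWithinAt)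
    (fun t ht ↦ (hderiv t ht).deriv ▸ hc t (interior_subset ht))
    a (left_mem_Icc.2 hab) b (right_mem_Icc.2 hab) hab

theorem forwardInvariant_setOf_eq {F : E → ℝ} (hF : Differentiable ℝ F)
    (hF₀ : ∀ p, orbitalDeriv v F p = 0) (c : ℝ) : ForwardInvariant v {p | F p = c} := by
  intro γ hγ h₀ t ht
  have hγ' : IsIntegralCurveOn γ (fun _ ↦ v) (Icc 0 t) := hγ.mono Icc_subset_Ici_self
  have hle := sub_le_mul_of_orbitalDeriv_le (c := 0) hF hγ' ht fun s _ ↦ (hF₀ _).le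
  have hge := sub_le_mul_of_orbitalDeriv_le (c := 0) hF.neg hγ' ht fun s _ ↦ by
    rw [orbitalDeriv_neg, hF₀, neg_zero]
  simp only [Pi.neg_apply] at hge
  change F (γ t) = c
  linarith [show F (γ 0) = c from h₀]

theorem exists_first_hit {f : ℝ → ℝ} {a b c : ℝ} (hf : ContinuousOn f (Icc a b)) (hab : a ≤ b)
    (ha : f a ≤ c) (hb : c ≤ f b) : ∃ s ∈ Icc a b, f s = c ∧ ∀ t ∈ Icc a s, f t ≤ c := by
  have hcompact : IsCompact (Icc a b ∩ f ⁻¹' {c}) :=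
    isCompact_Icc.of_isClosed_subset (hf.preimage_isClosed_of_isClosed isClosed_Icc
      isClosed_singleton) inter_subset_left
  obtain ⟨s, ⟨hs, hsc⟩, hleast⟩ :=
    hcompact.exists_isLeast (intermediate_value_Icc hab hf ⟨ha, hb⟩)
  refine ⟨s, hs, hsc, fun t ht ↦ ?_⟩
  by_contra! hct
  obtain ⟨u, hu, huc⟩ := intermediate_value_Icc ht.1
    (hf.mono (Icc_subset_Icc_right (ht.2.trans hs.2))) ⟨ha, hct.le⟩
  have hsu : s ≤ u := hleast ⟨⟨hu.1, hu.2.trans (ht.2.trans hs.2)⟩, huc⟩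
  have hts : t = s := le_antisymm ht.2 (hsu.trans hu.2)
  exact hct.ne' (hts ▸ hsc)

theorem exists_notMem_of_orbitalDeriv_neg {K : Set E} (hK : IsCompact K) (hv : Continuous v)
    (hV : ContDiff ℝ 1 V) (hneg : ∀ p ∈ K, orbitalDeriv v V p < 0) {γ : ℝ → E}
    (hγ : IsIntegralCurveOn γ (fun _ ↦ v) (Ici 0)) : ∃ t ≥ 0, γ t ∉ K := by
  by_contra! hmem
  obtain ⟨q, hq, hqmax⟩ :=
    hK.exists_isMaxOn ⟨γ 0, hmem 0 le_rfl⟩ (continuous_orbitalDeriv hv hV).continuousOn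
  obtain ⟨b, hb⟩ := (hK.image hV.continuous).bddBelow
  have hdecr : ∀ t ≥ 0, b ≤ V (γ 0) + orbitalDeriv v V q * t := fun t ht ↦ by
    have hVt := sub_le_mul_of_orbitalDeriv_le (hV.differentiable one_ne_zero)
      (hγ.mono Icc_subset_Ici_self) ht fun s hs ↦ hqmax (hmem s hs.1)
    linarith [hb (mem_image_of_mem V (hmem t ht))]
  have hbot : Tendsto (fun t ↦ V (γ 0) + orbitalDeriv v V q * t) atTop atBot :=
    tendsto_atBot_add_const_left _ _ (tendsto_id.const_mul_atTop_of_neg (hneg q hq))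
  obtain ⟨t, hlt, ht⟩ := ((hbot.eventually_lt_atBot b).and (eventually_ge_atTop 0)).exists
  exact (hdecr t ht).not_gt hlt

variable [ProperSpace E]

theorem lyapunovStableOn_of_orbitalDeriv_nonpos (hS : IsClosed S) (hinv : ForwardInvariant v S)
    (hV : Differentiable ℝ V) (hmin : ∀ᶠ p in 𝓝[S \ {e}] e, V e < V p)
    (hderiv : ∀ᶠ p in 𝓝[S] e, orbitalDeriv v V p ≤ 0) : LyapunovStableOn v S e := by
  intro U hU
  obtain ⟨r, hr, hball⟩ := nhds_basis_closedBall.eventually_iff.1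
    ((eventually_mem_set.2 hU).and
      ((eventually_nhdsWithin_iff.1 hmin).and (eventually_nhdsWithin_iff.1 hderiv)))
  obtain ⟨m, hem, hm⟩ : ∃ m, V e < m ∧ ∀ p ∈ sphere e r ∩ S, m ≤ V p :=
    ((isCompact_sphere e r).inter_right hS).exists_forall_le' hV.continuous.continuousOn
      fun p hp ↦ (hball (sphere_subset_closedBall hp.1)).2.1 ⟨hp.2, ne_of_mem_sphere hp.1 hr.ne'⟩
  filter_upwards [self_mem_nhdsWithin, nhdsWithin_le_nhds (ball_mem_nhds e hr),
    nhdsWithin_le_nhds (hV.continuous.continuousAt.eventually_lt_const hem)]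
  rintro _ h₀S h₀r h₀m γ hγ rfl t ht
  refine (hball (x := γ t) ?_).1
  by_contra! hout
  have hcont : ContinuousOn (fun s ↦ dist (γ s) e) (Icc 0 t) :=
    (continuous_id.dist continuous_const).comp_continuousOn
      (hγ.continuousOn.mono Icc_subset_Ici_self)
  obtain ⟨s, hs, hsr, hbefore⟩ :=
    exists_first_hit hcont ht (mem_ball.1 h₀r).le (not_le.1 hout).le
  have hdecr : V (γ s) - V (γ 0) ≤ 0 * (s - 0) :=
    sub_le_mul_of_orbitalDeriv_le hV (hγ.mono Icc_subset_Ici_self) hs.1 fun u hu ↦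
      (hball (hbefore u hu)).2.2 (hinv γ hγ h₀S u hu.1)
  linarith [hm (γ s) ⟨hsr, hinv γ hγ h₀S s hs.1⟩]

theorem LyapunovStableOn.locallyAttractiveOn (hstable : LyapunovStableOn v S e)
    (hS : IsClosed S) (hinv : ForwardInvariant v S) (hv : Continuous v) (hV : ContDiff ℝ 1 V)
    (hneg : ∀ᶠ p in 𝓝[S \ {e}] e, orbitalDeriv v V p < 0) : LocallyAttractiveOn v S e := by
  obtain ⟨r, hr, hball⟩ := nhds_basis_closedBall.eventually_iff.1 (eventually_nhdsWithin_iff.1 hneg)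
  filter_upwards [self_mem_nhdsWithin, hstable _ (closedBall_mem_nhds e hr)]
  rintro _ h₀S hstay γ hγ rfl U hU
  obtain ⟨δ, hδ, hreturn⟩ :=
    (nhdsWithin_hasBasis nhds_basis_ball S).eventually_iff.1 (hstable U hU)
  obtain ⟨t₀, ht₀, hclose⟩ : ∃ t₀ ≥ 0, γ t₀ ∈ ball e δ := by
    have hnegK : ∀ p ∈ (closedBall e r ∩ S) \ ball e δ, orbitalDeriv v V p < 0 := by
      rintro p ⟨⟨hpr, hpS⟩, hpδ⟩
      exact hball hpr ⟨hpS, fun hpe ↦ hpδ (hpe ▸ mem_ball_self hδ)⟩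
    obtain ⟨t₀, ht₀, hexit⟩ := exists_notMem_of_orbitalDeriv_neg
      (((isCompact_closedBall e r).inter_right hS).diff isOpen_ball) hv hV hnegK hγ
    refine ⟨t₀, ht₀, ?_⟩
    by_contra hfar
    exact hexit ⟨⟨hstay γ hγ rfl t₀ ht₀, hinv γ hγ h₀S t₀ ht₀⟩, hfar⟩
  rw [mem_map]
  filter_upwards [eventually_ge_atTop t₀] with t ht
  simpa using hreturn ⟨hclose, hinv γ hγ h₀S t₀ ht₀⟩ _
    (isIntegralCurveOn_comp_add_Ici hγ ht₀) (by simp) (t - t₀) (sub_nonneg.2 ht)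

end Lyapunov

section Euclidean

/-- The square of the Euclidean norm on `ℝ × ℝ × ℝ`, whose Mathlib norm is the sup norm. -/
def euclideanNormSq (p : ℝ × ℝ × ℝ) : ℝ :=
  p.1 ^ 2 + p.2.1 ^ 2 + p.2.2 ^ 2

/-- The Euclidean distance on `ℝ × ℝ × ℝ`, whose Mathlib distance is the sup distance. -/
noncomputable def euclideanDist (p q : ℝ × ℝ × ℝ) : ℝ :=
  √(euclideanNormSq (p - q))

theorem contDiff_euclideanNormSq : ContDiff ℝ 1 euclideanNormSq := by
  unfold euclideanNormSq
  fun_prop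

theorem orbitalDeriv_euclideanNormSq (v : ℝ × ℝ × ℝ → ℝ × ℝ × ℝ) (p : ℝ × ℝ × ℝ) :
    orbitalDeriv v euclideanNormSq p =
      2 * (p.1 * (v p).1 + p.2.1 * (v p).2.1 + p.2.2 * (v p).2.2) := by
  have hsnd := hasFDerivAt_snd (𝕜 := ℝ) (p := p)
  have hderiv : HasFDerivAt euclideanNormSq _ p :=
    ((hasFDerivAt_fst.pow 2).add (hsnd.fst.pow 2)).add (hsnd.snd.pow 2)
  rw [orbitalDeriv, hderiv.fderiv]
  simp only [Nat.add_one_sub_one, pow_one, nsmul_eq_mul, Nat.cast_ofNat,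
    add_apply, smul_apply, ContinuousLinearMap.comp_apply,
    ContinuousLinearMap.coe_fst', ContinuousLinearMap.coe_snd', smul_eq_mul]
  ring

theorem dist_le_euclideanDist (p q : ℝ × ℝ × ℝ) : dist p q ≤ euclideanDist p q := by
  simp only [Prod.dist_eq, Real.dist_eq, max_le_iff]
  refine ⟨?_, ?_, ?_⟩ <;> refine Real.abs_le_sqrt ?_ <;>
    simp only [euclideanNormSq, Prod.fst_sub, Prod.snd_sub] <;>
    linarith [sq_nonneg (p.1 - q.1), sq_nonneg (p.2.1 - q.2.1), sq_nonneg (p.2.2 - q.2.2)]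

theorem euclideanNormSq_pos {p : ℝ × ℝ × ℝ} (hp : p ≠ 0) : 0 < euclideanNormSq p := by
  simpa [euclideanDist] using (dist_pos.2 hp).trans_le (dist_le_euclideanDist p 0)

theorem nhds_basis_euclideanDist (e : ℝ × ℝ × ℝ) :
    (𝓝 e).HasBasis (fun r : ℝ ↦ 0 < r) fun r ↦ {p | euclideanDist p e < r} := by
  have hcont : Continuous fun p ↦ euclideanDist p e :=
    (contDiff_euclideanNormSq.continuous.comp (continuous_id.sub continuous_const)).sqrt
  refine nhds_basis_ball.to_hasBasis
    (fun r hr ↦ ⟨r, hr, fun p hp ↦ (dist_le_euclideanDist p e).trans_lt hp⟩) fun r hr ↦ ?_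
  have hself : euclideanDist e e < r := by simpa [euclideanDist, euclideanNormSq] using hr
  exact mem_nhds_iff.1 (hcont.continuousAt.eventually_lt_const hself)

variable {v : ℝ × ℝ × ℝ → ℝ × ℝ × ℝ} {S : Set (ℝ × ℝ × ℝ)} {e : ℝ × ℝ × ℝ}

theorem isIntegralCurve_prodMk {x y z : ℝ → ℝ}
    (hx : ∀ t, HasDerivAt x (v (x t, y t, z t)).1 t)
    (hy : ∀ t, HasDerivAt y (v (x t, y t, z t)).2.1 t)
    (hz : ∀ t, HasDerivAt z (v (x t, y t, z t)).2.2 t) :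
    IsIntegralCurve (fun t ↦ (x t, y t, z t)) fun _ ↦ v :=
  fun t ↦ (hx t).prodMk ((hy t).prodMk (hz t))

theorem LyapunovStableOn.exists_forall_euclideanDist_lt (hstable : LyapunovStableOn v S e) {η : ℝ}
    (hη : 0 < η) : ∃ δ > 0, ∀ x y z : ℝ → ℝ,
      (∀ t, HasDerivAt x (v (x t, y t, z t)).1 t) →
      (∀ t, HasDerivAt y (v (x t, y t, z t)).2.1 t) →
      (∀ t, HasDerivAt z (v (x t, y t, z t)).2.2 t) →
      (x 0, y 0, z 0) ∈ S → euclideanDist (x 0, y 0, z 0) e < δ →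
      ∀ t ≥ 0, euclideanDist (x t, y t, z t) e < η := by
  obtain ⟨δ, hδ, hclose⟩ := (nhdsWithin_hasBasis (nhds_basis_euclideanDist e) S).eventually_iff.1
    (hstable _ ((nhds_basis_euclideanDist e).mem_of_mem hη))
  exact ⟨δ, hδ, fun x y z hx hy hz hS h₀ ↦
    hclose ⟨h₀, hS⟩ _ ((isIntegralCurve_prodMk hx hy hz).isIntegralCurveOn _) rfl⟩

theorem LocallyAttractiveOn.exists_forall_tendsto (hattr : LocallyAttractiveOn v S e) :
    ∃ δ > 0, ∀ x y z : ℝ → ℝ,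
      (∀ t, HasDerivAt x (v (x t, y t, z t)).1 t) →
      (∀ t, HasDerivAt y (v (x t, y t, z t)).2.1 t) →
      (∀ t, HasDerivAt z (v (x t, y t, z t)).2.2 t) →
      (x 0, y 0, z 0) ∈ S → euclideanDist (x 0, y 0, z 0) e < δ →
      Tendsto (fun t ↦ (x t, y t, z t)) atTop (𝓝 e) := by
  obtain ⟨δ, hδ, hclose⟩ :=
    (nhdsWithin_hasBasis (nhds_basis_euclideanDist e) S).eventually_iff.1 hattr
  exact ⟨δ, hδ, fun x y z hx hy hz hS h₀ ↦
    hclose ⟨h₀, hS⟩ _ ((isIntegralCurve_prodMk hx hy hz).isIntegralCurveOn _) rfl⟩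

end Euclidean

theorem eq_one_of_one_le_mul_pow {a b : ℝ} {n : ℕ} (hn : n ≠ 0) (ha : 0 < a) (hb : 0 < b)
    (hsum : a + n * b ≤ n + 1) (hprod : 1 ≤ a * b ^ n) : a = 1 ∧ b = 1 := by
  have hn' : (0 : ℝ) < n := by positivity
  have hlog : 0 ≤ Real.log a + n * Real.log b := by
    rw [← Real.log_pow, ← Real.log_mul ha.ne' (by positivity)]
    exact Real.log_nonneg hprod
  have hla := Real.log_le_sub_one_of_pos ha
  have hlb := mul_le_mul_of_nonneg_left (Real.log_le_sub_one_of_pos hb) hn'.le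
  constructor <;> by_contra hne
  · linarith [Real.log_lt_sub_one_of_pos ha hne]
  · linarith [mul_lt_mul_of_pos_left (Real.log_lt_sub_one_of_pos hb hne) hn']

namespace Rattleback

/-- The unperturbed rattleback field. -/
def field (lam : ℕ) (p : ℝ × ℝ × ℝ) : ℝ × ℝ × ℝ :=
  (lam * p.1 * p.2.2, -(p.2.1 * p.2.2), p.2.1 ^ 2 - lam * p.1 ^ 2)

/-- The direction of the perturbation, which is the cross product `field lam p × p`. -/
def perturbationDirection (lam : ℕ) (p : ℝ × ℝ × ℝ) : ℝ × ℝ × ℝ :=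
  (p.2.1 * (lam * p.1 ^ 2 - p.2.1 ^ 2 - p.2.2 ^ 2),
    p.1 * (-lam * p.1 ^ 2 + p.2.1 ^ 2 - lam * p.2.2 ^ 2),
    (lam + 1) * p.1 * p.2.1 * p.2.2)

/-- The perturbed rattleback field `p₋`. -/
def perturbedField (lam : ℕ) (ε h : ℝ) (p : ℝ × ℝ × ℝ) : ℝ × ℝ × ℝ :=
  field lam p + (ε * (p.1 * p.2.1 ^ lam - h) * p.2.1 ^ (lam - 1)) • perturbationDirection lam p

/-- The first integral `H = xy^λ` of the unperturbed field. -/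
def firstIntegral (lam : ℕ) (p : ℝ × ℝ × ℝ) : ℝ :=
  p.1 * p.2.1 ^ lam

/-- The equilibrium `e₊`, with `m` in the role of `|M|`. -/
noncomputable def equilibrium (lam : ℕ) (m : ℝ) : ℝ × ℝ × ℝ :=
  (m, m * √lam, 0)

variable {lam : ℕ} {ε h m : ℝ} {p : ℝ × ℝ × ℝ}

theorem continuous_perturbedField : Continuous (perturbedField lam ε h) := by
  unfold perturbedField field perturbationDirection
  fun_prop

theorem contDiff_firstIntegral : ContDiff ℝ 1 (firstIntegral lam) := by
  unfold firstIntegral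
  fun_prop

theorem forwardInvariant_sphere (c : ℝ) :
    ForwardInvariant (perturbedField lam ε h) {p | euclideanNormSq p = c} := by
  refine forwardInvariant_setOf_eq (contDiff_euclideanNormSq.differentiable one_ne_zero)
    (fun p ↦ ?_) c
  simp only [orbitalDeriv_euclideanNormSq, perturbedField, field, perturbationDirection,
    Prod.smul_mk, smul_eq_mul, Prod.mk_add_mk]
  ring

theorem orbitalDeriv_firstIntegral (hlam : lam ≠ 0) :
    orbitalDeriv (perturbedField lam ε h) (firstIntegral lam) p =
      ε * (h - firstIntegral lam p) * (p.2.1 ^ (lam - 1)) ^ 2 * euclideanNormSq (field lam p) := by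
  have hsnd := hasFDerivAt_snd (𝕜 := ℝ) (p := p)
  have hderiv : HasFDerivAt (firstIntegral lam) _ p := hasFDerivAt_fst.mul (hsnd.fst.pow lam)
  rw [orbitalDeriv, hderiv.fderiv]
  obtain ⟨n, rfl⟩ := Nat.exists_eq_succ_of_ne_zero hlam
  simp only [perturbedField, field, perturbationDirection, firstIntegral, euclideanNormSq,
    Nat.succ_eq_add_one, add_tsub_cancel_right, nsmul_eq_mul, Nat.cast_add, Nat.cast_one,
    Prod.smul_mk, smul_eq_mul, Prod.mk_add_mk, add_apply, smul_apply,
    ContinuousLinearMap.comp_apply, ContinuousLinearMap.coe_fst', ContinuousLinearMap.coe_snd']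
  ring

theorem field_equilibrium : field lam (equilibrium lam m) = 0 := by
  simp [field, equilibrium, mul_pow, mul_comm]

theorem firstIntegral_equilibrium :
    firstIntegral lam (equilibrium lam m) = m ^ (lam + 1) * √lam ^ lam := by
  simp only [firstIntegral, equilibrium]
  ring

theorem firstIntegral_equilibrium_sq :
    firstIntegral lam (equilibrium lam m) ^ 2 = m ^ 2 * (lam * m ^ 2) ^ lam := by
  rw [firstIntegral, equilibrium, mul_pow, ← pow_mul, mul_comm lam 2, pow_mul, mul_pow,
    Real.sq_sqrt (Nat.cast_nonneg _), mul_comm (m ^ 2) (lam : ℝ)]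

theorem perturbedField_equilibrium :
    perturbedField lam ε (firstIntegral lam (equilibrium lam m)) (equilibrium lam m) = 0 := by
  simp [perturbedField, field_equilibrium, firstIntegral]

theorem eventually_pos_nhds_equilibrium (hlam : lam ≠ 0) (hm : 0 < m) :
    ∀ᶠ p in 𝓝 (equilibrium lam m), 0 < p.1 ∧ 0 < p.2.1 := by
  have hx : 0 < (equilibrium lam m).1 := hm
  have hy : 0 < (equilibrium lam m).2.1 := by
    simp only [equilibrium]
    positivity
  exact (continuous_fst.continuousAt.eventually_const_lt hx).and
    (continuous_snd.fst.continuousAt.eventually_const_lt hy)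

theorem eq_equilibrium_of_sq_eq (hm : 0 ≤ m) (hx : 0 ≤ p.1) (hy : 0 ≤ p.2.1)
    (hp : euclideanNormSq p = (lam + 1) * m ^ 2) (hx₂ : p.1 ^ 2 = m ^ 2)
    (hy₂ : p.2.1 ^ 2 = lam * m ^ 2) : p = equilibrium lam m := by
  have hz₂ : p.2.2 ^ 2 = 0 := by
    rw [euclideanNormSq] at hp
    linarith
  have hy' : p.2.1 ^ 2 = (m * √lam) ^ 2 := by
    rw [hy₂, mul_pow, Real.sq_sqrt (Nat.cast_nonneg _), mul_comm]
  exact Prod.ext ((pow_left_inj₀ hx hm two_ne_zero).1 hx₂) <|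
    Prod.ext ((pow_left_inj₀ hy (mul_nonneg hm (Real.sqrt_nonneg _)) two_ne_zero).1 hy') <|
    (pow_eq_zero_iff two_ne_zero).1 hz₂

theorem firstIntegral_lt_of_ne_equilibrium (hlam : lam ≠ 0) (hm : 0 < m) (hx : 0 < p.1)
    (hy : 0 < p.2.1) (hp : euclideanNormSq p = (lam + 1) * m ^ 2) (hne : p ≠ equilibrium lam m) :
    firstIntegral lam p < firstIntegral lam (equilibrium lam m) := by
  contrapose! hne
  have hsum : p.1 ^ 2 / m ^ 2 + lam * (p.2.1 ^ 2 / (lam * m ^ 2)) ≤ lam + 1 := by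
    rw [euclideanNormSq] at hp
    field_simp
    linarith [sq_nonneg p.2.2]
  have hpos : 0 < firstIntegral lam (equilibrium lam m) := by
    rw [firstIntegral_equilibrium]
    positivity
  have hprod : 1 ≤ p.1 ^ 2 / m ^ 2 * (p.2.1 ^ 2 / (lam * m ^ 2)) ^ lam := calc
    1 ≤ (firstIntegral lam p / firstIntegral lam (equilibrium lam m)) ^ 2 :=
      one_le_pow₀ ((one_le_div hpos).2 hne)
    _ = p.1 ^ 2 / m ^ 2 * (p.2.1 ^ 2 / (lam * m ^ 2)) ^ lam := by
      rw [div_pow, firstIntegral_equilibrium_sq, firstIntegral]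
      ring
  obtain ⟨hx₂, hy₂⟩ := eq_one_of_one_le_mul_pow hlam (by positivity) (by positivity) hsum hprod
  exact eq_equilibrium_of_sq_eq hm.le hx.le hy.le hp (eq_of_div_eq_one hx₂) (eq_of_div_eq_one hy₂)

theorem eq_equilibrium_of_field_eq_zero (hm : 0 ≤ m) (hx : 0 ≤ p.1) (hy : 0 < p.2.1)
    (hp : euclideanNormSq p = (lam + 1) * m ^ 2) (hzero : field lam p = 0) :
    p = equilibrium lam m := by
  simp only [field, Prod.mk_eq_zero, neg_eq_zero, mul_eq_zero, hy.ne', false_or] at hzero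
  obtain ⟨-, hz, hxy⟩ := hzero
  have hx₂ : p.1 ^ 2 = m ^ 2 := by
    refine mul_left_cancel₀ (by positivity : (lam + 1 : ℝ) ≠ 0) ?_
    rw [← hp, euclideanNormSq, hz]
    linarith
  exact eq_equilibrium_of_sq_eq hm hx hy.le hp hx₂ (by rw [← hx₂]; linarith)

theorem eventually_firstIntegral_lt (hlam : lam ≠ 0) (hm : 0 < m) :
    ∀ᶠ p in 𝓝[{p | euclideanNormSq p = (lam + 1) * m ^ 2} \ {equilibrium lam m}]
      equilibrium lam m, firstIntegral lam p < firstIntegral lam (equilibrium lam m) := by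
  filter_upwards [self_mem_nhdsWithin,
    nhdsWithin_le_nhds (eventually_pos_nhds_equilibrium hlam hm)] with p ⟨hp, hne⟩ ⟨hx, hy⟩
  exact firstIntegral_lt_of_ne_equilibrium hlam hm hx hy hp hne

theorem eventually_orbitalDeriv_firstIntegral_pos (hlam : lam ≠ 0) (hm : 0 < m) (hε : 0 < ε) :
    ∀ᶠ p in 𝓝[{p | euclideanNormSq p = (lam + 1) * m ^ 2} \ {equilibrium lam m}]
      equilibrium lam m,
      0 < orbitalDeriv (perturbedField lam ε (firstIntegral lam (equilibrium lam m)))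
        (firstIntegral lam) p := by
  filter_upwards [self_mem_nhdsWithin, eventually_firstIntegral_lt hlam hm,
    nhdsWithin_le_nhds (eventually_pos_nhds_equilibrium hlam hm)] with p ⟨hp, hne⟩ hlt ⟨hx, hy⟩
  have hfield : 0 < euclideanNormSq (field lam p) :=
    euclideanNormSq_pos fun hzero ↦ hne (eq_equilibrium_of_field_eq_zero hm.le hx.le hy hp hzero)
  rw [orbitalDeriv_firstIntegral hlam]
  exact mul_pos (mul_pos (mul_pos hε (sub_pos.2 hlt)) (by positivity)) hfield

end Rattleback

open Rattleback

theorem rattleback_perturbed_stabilizes_equilibrium_general {lam : ℕ} (hlam : lam ≠ 0) {m ε : ℝ}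
    (hm : 0 < m) (hε : 0 < ε) :
    let v := perturbedField lam ε (m ^ (lam + 1) * √lam ^ lam)
    let S := {p | euclideanNormSq p = (lam + 1) * m ^ 2}
    v (equilibrium lam m) = 0 ∧ LyapunovStableOn v S (equilibrium lam m) ∧
      LocallyAttractiveOn v S (equilibrium lam m) := by
  rw [← firstIntegral_equilibrium]
  intro v S
  have hzero : v (equilibrium lam m) = 0 := perturbedField_equilibrium
  have hclosed : IsClosed S := isClosed_eq contDiff_euclideanNormSq.continuous continuous_const
  have hinv : ForwardInvariant v S := forwardInvariant_sphere _
  have hV : ContDiff ℝ 1 (-firstIntegral lam) := contDiff_firstIntegral.neg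
  have hmin : ∀ᶠ p in 𝓝[S \ {equilibrium lam m}] equilibrium lam m,
      (-firstIntegral lam) (equilibrium lam m) < (-firstIntegral lam) p :=
    (eventually_firstIntegral_lt hlam hm).mono fun p hp ↦ neg_lt_neg hp
  have hneg : ∀ᶠ p in 𝓝[S \ {equilibrium lam m}] equilibrium lam m,
      orbitalDeriv v (-firstIntegral lam) p < 0 :=
    (eventually_orbitalDeriv_firstIntegral_pos hlam hm hε).mono fun p hp ↦ by
      rwa [orbitalDeriv_neg, neg_lt_zero]
  have hstable : LyapunovStableOn v S (equilibrium lam m) :=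
    lyapunovStableOn_of_orbitalDeriv_nonpos hclosed hinv (hV.differentiable one_ne_zero) hmin
      (eventually_orbitalDeriv_nonpos hzero hneg)
  exact ⟨hzero, hstable,
    hstable.locallyAttractiveOn hclosed hinv continuous_perturbedField hV hneg⟩

/-- For even `λ ≥ 2`, `M ≠ 0`, `ε > 0` and `h = |M|^{λ+1}(√λ)^λ`, the point
`e₊ = (|M|, |M|√λ, 0)` is an equilibrium of the perturbed rattleback system `p₋`
which is asymptotically stable with respect to perturbations along the invariant
sphere `x² + y² + z² = (λ+1)M²`: (i) Lyapunov stability along the sphere, and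
(ii) local attractivity along the sphere. -/
theorem rattleback_perturbed_stabilizes_equilibrium (lam : ℕ) (hlam : 2 ≤ lam)
    (hev : Even lam) (M : ℝ) (hM : M ≠ 0) (ε : ℝ) (hε : 0 < ε)
    (h : ℝ) (hh : h = |M| ^ (lam + 1) * (Real.sqrt lam) ^ lam)
    (e : ℝ × ℝ × ℝ) (he : e = (|M|, |M| * Real.sqrt lam, 0)) :
    -- e₊ is an equilibrium of the perturbed system p₋
    ((lam : ℝ) * e.1 * e.2.2 +
        ε * (e.1 * e.2.1 ^ lam - h) * e.2.1 ^ (lam - 1) *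
          (e.2.1 * ((lam : ℝ) * e.1 ^ 2 - e.2.1 ^ 2 - e.2.2 ^ 2)) = 0 ∧
      -(e.2.1 * e.2.2) +
        ε * (e.1 * e.2.1 ^ lam - h) * e.2.1 ^ (lam - 1) *
          (e.1 * (-(lam : ℝ) * e.1 ^ 2 + e.2.1 ^ 2 - (lam : ℝ) * e.2.2 ^ 2)) = 0 ∧
      e.2.1 ^ 2 - (lam : ℝ) * e.1 ^ 2 +
        ε * (e.1 * e.2.1 ^ lam - h) * e.2.1 ^ (lam - 1) *
          (((lam : ℝ) + 1) * e.1 * e.2.1 * e.2.2) = 0) ∧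
    -- (i) stability along the invariant sphere
    (∀ ε' > (0 : ℝ), ∃ δ > (0 : ℝ), ∀ x y z : ℝ → ℝ,
      (∀ t : ℝ, HasDerivAt x ((lam : ℝ) * x t * z t +
        ε * (x t * (y t) ^ lam - h) * (y t) ^ (lam - 1) *
          (y t * ((lam : ℝ) * (x t) ^ 2 - (y t) ^ 2 - (z t) ^ 2))) t) →
      (∀ t : ℝ, HasDerivAt y (-(y t * z t) +
        ε * (x t * (y t) ^ lam - h) * (y t) ^ (lam - 1) *
          (x t * (-(lam : ℝ) * (x t) ^ 2 + (y t) ^ 2 - (lam : ℝ) * (z t) ^ 2))) t) →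
      (∀ t : ℝ, HasDerivAt z ((y t) ^ 2 - (lam : ℝ) * (x t) ^ 2 +
        ε * (x t * (y t) ^ lam - h) * (y t) ^ (lam - 1) *
          (((lam : ℝ) + 1) * x t * y t * z t)) t) →
      (x 0) ^ 2 + (y 0) ^ 2 + (z 0) ^ 2 = ((lam : ℝ) + 1) * M ^ 2 →
      Real.sqrt ((x 0 - e.1) ^ 2 + (y 0 - e.2.1) ^ 2 + (z 0 - e.2.2) ^ 2) < δ →
      ∀ t ≥ (0 : ℝ),
        Real.sqrt ((x t - e.1) ^ 2 + (y t - e.2.1) ^ 2 + (z t - e.2.2) ^ 2) < ε') ∧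
    -- (ii) attractivity along the invariant sphere
    (∃ δ₀ > (0 : ℝ), ∀ x y z : ℝ → ℝ,
      (∀ t : ℝ, HasDerivAt x ((lam : ℝ) * x t * z t +
        ε * (x t * (y t) ^ lam - h) * (y t) ^ (lam - 1) *
          (y t * ((lam : ℝ) * (x t) ^ 2 - (y t) ^ 2 - (z t) ^ 2))) t) →
      (∀ t : ℝ, HasDerivAt y (-(y t * z t) +
        ε * (x t * (y t) ^ lam - h) * (y t) ^ (lam - 1) *
          (x t * (-(lam : ℝ) * (x t) ^ 2 + (y t) ^ 2 - (lam : ℝ) * (z t) ^ 2))) t) →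
      (∀ t : ℝ, HasDerivAt z ((y t) ^ 2 - (lam : ℝ) * (x t) ^ 2 +
        ε * (x t * (y t) ^ lam - h) * (y t) ^ (lam - 1) *
          (((lam : ℝ) + 1) * x t * y t * z t)) t) →
      (x 0) ^ 2 + (y 0) ^ 2 + (z 0) ^ 2 = ((lam : ℝ) + 1) * M ^ 2 →
      Real.sqrt ((x 0 - e.1) ^ 2 + (y 0 - e.2.1) ^ 2 + (z 0 - e.2.2) ^ 2) < δ₀ →
      Tendsto (fun t : ℝ => (x t, y t, z t)) atTop (nhds e)) := by
  subst hh he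
  rw [← sq_abs M]
  obtain ⟨hzero, hstable, hattr⟩ := rattleback_perturbed_stabilizes_equilibrium_general
    (by omega : lam ≠ 0) (abs_pos.2 hM) hε
  exact ⟨⟨congrArg Prod.fst hzero, congrArg (·.2.1) hzero, congrArg (·.2.2) hzero⟩,
    fun _ hη ↦ hstable.exists_forall_euclideanDist_lt hη, hattr.exists_forall_tendsto⟩
end
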